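/- arXiv:2510.06613 — 3 statements merged into one kernel-verified Lean document; each statement's English description precedes it below -/
import Mathlib

section
/- For every real constant c₀ > 2 there exists a positive integer N(c₀) such that the following holds for every integer n ≥ N(c₀) and all real d₁, d₂ with 0 ≤ d₂ < d₁ ≤ 2 − d₂ − c₀/n. Define p, q by 1/(p+1) = 1/2 − d₁/n and 1/(q+1) = 1/2 − d₂/n; set μ(x) = [(n+2)n + (n²−3n−1)x − (n(n+2)/4)x²]/(n−1)²; choose r = −3(d₁−d₂)/(n−2d₂), s = (d₁−d₂)/(n−2d₁), k₁ = (n/(2(n−1)))(r − 2 + r/n + r²/2), k₂ = (n/(2(n−1)))(s − 2 + s/n + s²/2), θ₁ = (μ(r) − r)/p, θ₂ = (μ(s) − s)/q; and define δ₁ = (r + θ₁p)(r + θ₁(p−2) + 1) + θ₁(θ₁−1)p, δ₂ = (s + θ₂q)(s + θ₂(q−2) + 1) + θ₂(θ₂−1)q, α₁ = −((n−1)/n)k₁² + k₁(r−1) − r(r−1)/2, α₂ = −((n−1)/n)k₂² + k₂(s−1) − s(s−1)/2, β₁ = ((3/2)r − ((n+2)/n)k₁)(2θ₁(p−1) + r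 + 1)/δ₁ − (n−1)/n, β₂ = ((3/2)s − ((n+2)/n)k₂)(2θ₂(q−1) + s + 1)/δ₂ − (n−1)/n, γ₁ = ((3/2)r − ((n+2)/n)k₁)·p/δ₁, γ₂ = ((3/2)s − ((n+2)/n)k₂)·q/δ₂. Then α₁ > 0, α₂ > 0, β₁ > 0, β₂ > 0, γ₁ > 0, γ₂ > 0 and β₁β₂ − γ₁γ₂ > 0. -/
open MeasureTheory Real
open scoped InnerProductSpace

/-- The Laplacian of a function `f : ℝⁿ → ℝ`, as the sum of its second partial
derivatives. -/
noncomputable def lap {n : ℕ} (f : EuclideanSpace ℝ (Fin n) → ℝ)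
    (x : EuclideanSpace ℝ (Fin n)) : ℝ :=
  ∑ i : Fin n, fderiv ℝ (fun y => fderiv ℝ f y (EuclideanSpace.single i 1)) x
    (EuclideanSpace.single i 1)


namespace PosCond

section Ring
variable {B : Type*} [CommRing B]

/-- Truncated expansion modulo `e ^ 3`. -/
def Tr (e X X0 X1 X2 : B) : Prop := ∃ t : B, X = X0 + X1 * e + X2 * e ^ 2 + e ^ 3 * t

lemma Tr.add {e X X0 X1 X2 Y Y0 Y1 Y2 : B} (h : Tr e X X0 X1 X2) (k : Tr e Y Y0 Y1 Y2) :
    Tr e (X + Y) (X0 + Y0) (X1 + Y1) (X2 + Y2) := by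
  obtain ⟨t, rfl⟩ := h
  obtain ⟨u, rfl⟩ := k
  exact ⟨t + u, by ring⟩

lemma Tr.sub {e X X0 X1 X2 Y Y0 Y1 Y2 : B} (h : Tr e X X0 X1 X2) (k : Tr e Y Y0 Y1 Y2) :
    Tr e (X - Y) (X0 - Y0) (X1 - Y1) (X2 - Y2) := by
  obtain ⟨t, rfl⟩ := h
  obtain ⟨u, rfl⟩ := k
  exact ⟨t - u, by ring⟩

lemma Tr.mul {e X X0 X1 X2 Y Y0 Y1 Y2 : B} (h : Tr e X X0 X1 X2) (k : Tr e Y Y0 Y1 Y2) :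
    Tr e (X * Y) (X0 * Y0) (X0 * Y1 + X1 * Y0) (X0 * Y2 + X1 * Y1 + X2 * Y0) := by
  obtain ⟨t, rfl⟩ := h
  obtain ⟨u, rfl⟩ := k
  exact ⟨(X0 + X1 * e + X2 * e ^ 2) * u + t * (Y0 + Y1 * e + Y2 * e ^ 2 + e ^ 3 * u)
    + X1 * Y2 + X2 * Y1 + X2 * Y2 * e, by ring⟩

lemma Tr.const (e c : B) : Tr e c c 0 0 := ⟨0, by ring⟩

lemma Tr.var (e : B) : Tr e e 0 1 0 := ⟨0, by ring⟩

lemma Tr.geom {e c j : B} (h : j * (1 - c * e) = 1) : Tr e j 1 c (c ^ 2) :=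
  ⟨c ^ 3 * j, by linear_combination (1 + c * e + c ^ 2 * e ^ 2) * h⟩

lemma Tr.congr {e X X0 X1 X2 Y Y0 Y1 Y2 : B} (h : Tr e X X0 X1 X2) (hX : X = Y)
    (h0 : X0 = Y0) (h1 : X1 = Y1) (h2 : X2 = Y2) : Tr e Y Y0 Y1 Y2 := by
  subst hX h0 h1 h2; exact h

lemma Tr.first {e X X0 X1 X2 : B} (h : Tr e X X0 X1 X2) : ∃ t, X = X0 + e * t := by
  obtain ⟨t, rfl⟩ := h
  exact ⟨X1 + X2 * e + e ^ 2 * t, by ring⟩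

def fg (e i : B) : B := (1 + 2 * e) * i
def fm (e i : B) : B := (1 + 2 * e) * (i * i)
def fEta (e S i ρ : B) : B := ρ * (3 - fg e i * (1 + e + S * e * ρ))
def fNu (e S i ρ : B) : B :=
  2 * (1 - 3 * e - e * e) * ρ * (i * i) - fm e i * (S * e) * (ρ * ρ)
def fTau (e S i ρ ω : B) : B :=
  fNu e S i ρ - 2 * ρ - ω * (fm e i + S * e * (fNu e S i ρ - 2 * ρ))
def fDel (e S i ρ ω : B) : B :=
  fm e i * (fNu e S i ρ - 2 * fTau e S i ρ ω) + fNu e S i ρ * (1 - fm e i)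
  + S * e * (fNu e S i ρ * (fNu e S i ρ - 2 * fTau e S i ρ ω))
  + (fNu e S i ρ - 2 * ρ) * (fm e i - 1) + fm e i * fTau e S i ρ ω
  + S * e * ((fNu e S i ρ - 2 * ρ) * fTau e S i ρ ω)
def fA (e S i ρ ϖ ω : B) : B := 2 * ρ + 2 * ϖ * (fm e i + S * e * fTau e S i ρ ω)
def fN (e S i ρ ϖ ω : B) : B :=
  fEta e S i ρ + fg e i * fA e S i ρ ϖ ω + S * e * (fEta e S i ρ * fA e S i ρ ϖ ω)
    - (1 - e) * fDel e S i ρ ω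
def fM (e S i ρ ϖ : B) : B :=
  fEta e S i ρ + fg e i * ϖ + S * e * (fEta e S i ρ * ϖ)

lemma tr_g {e i : B} (ti : Tr e i 1 1 1) : Tr e (fg e i) 1 3 3 :=
  (((Tr.const e 1).add ((Tr.const e 2).mul (Tr.var e))).mul ti).congr rfl
    (by ring) (by ring) (by ring)

lemma tr_m {e i : B} (ti : Tr e i 1 1 1) : Tr e (fm e i) 1 4 7 :=
  (((Tr.const e 1).add ((Tr.const e 2).mul (Tr.var e))).mul (ti.mul ti)).congr rfl
    (by ring) (by ring) (by ring)

/-- Expansions of all the quantities of half 1 modulo `e ^ 3`. -/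
lemma tr_half1 {e S x i ρ ϖ ω : B} (ti : Tr e i 1 1 1)
    (tr : Tr e ρ (- 3 * x)
      (- 6 * S * x + 6 * S * x ^ 2)
      (- 12 * S ^ 2 * x + 24 * S ^ 2 * x ^ 2 - 12 * S ^ 2 * x ^ 3))
    (tp : Tr e ϖ (4 + 4 * x)
      (8 * S + 16 * S * x + 8 * S * x ^ 2)
      (16 * S ^ 2 + 48 * S ^ 2 * x + 48 * S ^ 2 * x ^ 2 + 16 * S ^ 2 * x ^ 3))
    (tw : Tr e ω (4 + 4 * x)
      (- 8 * S - 16 * S * x - 8 * S * x ^ 2)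
      (16 * S ^ 2 + 48 * S ^ 2 * x + 48 * S ^ 2 * x ^ 2 + 16 * S ^ 2 * x ^ 3)) :
    Tr e (fDel e S i ρ ω) (4 - 2 * x)
      (32 + 32 * x - 8 * S - 76 * S * x - 8 * S * x ^ 2)
      (120 + 120 * x - 64 * S - 272 * S * x - 208 * S * x ^ 2 + 16 * S ^ 2 + 24 * S ^ 2 * x + 360 * S ^ 2 * x ^ 2 - 32 * S ^ 2 * x ^ 3) ∧
    Tr e (fEta e S i ρ) (- 6 * x)
      (12 * x - 12 * S * x + 3 * S * x ^ 2)
      (18 * x + 24 * S * x - 51 * S * x ^ 2 - 24 * S ^ 2 * x + 12 * S ^ 2 * x ^ 2 + 12 * S ^ 2 * x ^ 3) ∧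
    Tr e (fN e S i ρ ϖ ω) (4 - 2 * x)
      (28 + 16 * x - 8 * S - 28 * S * x - 5 * S * x ^ 2)
      (88 + 88 * x - 56 * S - 88 * S * x - 47 * S * x ^ 2 + 16 * S ^ 2 + 24 * S ^ 2 * x - 12 * S ^ 2 * x ^ 2 + 10 * S ^ 2 * x ^ 3) ∧
    Tr e (fM e S i ρ ϖ) (4 - 2 * x)
      (12 + 24 * x + 8 * S - 20 * S * x - 13 * S * x ^ 2)
      (12 + 30 * x + 24 * S + 120 * S * x + 21 * S * x ^ 2 + 16 * S ^ 2 - 72 * S ^ 2 * x - 72 * S ^ 2 * x ^ 2 - 8 * S ^ 2 * x ^ 3) := by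
  have c1 := Tr.const e (1 : B)
  have c2 := Tr.const e (2 : B)
  have c3 := Tr.const e (3 : B)
  have ve := Tr.var e
  have tS := (Tr.const e S).mul ve
  have tg := tr_g ti
  have tm := tr_m ti
  have teta : Tr e (fEta e S i ρ) (- 6 * x)
      (12 * x - 12 * S * x + 3 * S * x ^ 2)
      (18 * x + 24 * S * x - 51 * S * x ^ 2 - 24 * S ^ 2 * x + 12 * S ^ 2 * x ^ 2 + 12 * S ^ 2 * x ^ 3) :=
    (tr.mul (c3.sub (tg.mul ((c1.add ve).add (tS.mul tr))))).congr rfl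
      (by ring) (by ring) (by ring)
  have tnu : Tr e (fNu e S i ρ) (- 6 * x)
      (6 * x - 12 * S * x + 3 * S * x ^ 2)
      (24 * x + 12 * S * x - 48 * S * x ^ 2 - 24 * S ^ 2 * x + 12 * S ^ 2 * x ^ 2 + 12 * S ^ 2 * x ^ 3) :=
    ((((c2.mul ((c1.sub (c3.mul ve)).sub (ve.mul ve))).mul tr).mul (ti.mul ti)).sub ((tm.mul tS).mul (tr.mul tr))).congr rfl
      (by ring) (by ring) (by ring)
  have tta : Tr e (fTau e S i ρ ω) (- 4 - 4 * x)
      (- 16 - 10 * x + 8 * S + 16 * S * x - 1 * S * x ^ 2)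
      (- 28 - 4 * x + 32 * S + 52 * S * x - 40 * S * x ^ 2 - 16 * S ^ 2 - 48 * S ^ 2 * x - 48 * S ^ 2 * x ^ 2 + 56 * S ^ 2 * x ^ 3) :=
    ((tnu.sub (c2.mul tr)).sub (tw.mul (tm.add (tS.mul (tnu.sub (c2.mul tr)))))).congr rfl
      (by ring) (by ring) (by ring)
  have tde : Tr e (fDel e S i ρ ω) (4 - 2 * x)
      (32 + 32 * x - 8 * S - 76 * S * x - 8 * S * x ^ 2)
      (120 + 120 * x - 64 * S - 272 * S * x - 208 * S * x ^ 2 + 16 * S ^ 2 + 24 * S ^ 2 * x + 360 * S ^ 2 * x ^ 2 - 32 * S ^ 2 * x ^ 3) :=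
    ((((((tm.mul (tnu.sub (c2.mul tta))).add (tnu.mul (c1.sub tm))).add (tS.mul (tnu.mul (tnu.sub (c2.mul tta))))).add ((tnu.sub (c2.mul tr)).mul (tm.sub c1))).add (tm.mul tta)).add (tS.mul ((tnu.sub (c2.mul tr)).mul tta))).congr rfl
      (by ring) (by ring) (by ring)
  have tA : Tr e (fA e S i ρ ϖ ω) (8 + 2 * x)
      (32 + 32 * x - 16 * S - 44 * S * x - 4 * S * x ^ 2)
      (56 + 56 * x - 64 * S - 80 * S * x - 16 * S * x ^ 2 + 32 * S ^ 2 + 72 * S ^ 2 * x + 72 * S ^ 2 * x ^ 2 - 64 * S ^ 2 * x ^ 3) :=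
    ((c2.mul tr).add ((c2.mul tp).mul (tm.add (tS.mul tta)))).congr rfl
      (by ring) (by ring) (by ring)
  have tN : Tr e (fN e S i ρ ϖ ω) (4 - 2 * x)
      (28 + 16 * x - 8 * S - 28 * S * x - 5 * S * x ^ 2)
      (88 + 88 * x - 56 * S - 88 * S * x - 47 * S * x ^ 2 + 16 * S ^ 2 + 24 * S ^ 2 * x - 12 * S ^ 2 * x ^ 2 + 10 * S ^ 2 * x ^ 3) :=
    (((teta.add (tg.mul tA)).add (tS.mul (teta.mul tA))).sub ((c1.sub ve).mul tde)).congr rfl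
      (by ring) (by ring) (by ring)
  have tM : Tr e (fM e S i ρ ϖ) (4 - 2 * x)
      (12 + 24 * x + 8 * S - 20 * S * x - 13 * S * x ^ 2)
      (12 + 30 * x + 24 * S + 120 * S * x + 21 * S * x ^ 2 + 16 * S ^ 2 - 72 * S ^ 2 * x - 72 * S ^ 2 * x ^ 2 - 8 * S ^ 2 * x ^ 3) :=
    ((teta.add (tg.mul tp)).add (tS.mul (teta.mul tp))).congr rfl
      (by ring) (by ring) (by ring)
  exact ⟨tde, teta, tN, tM⟩

/-- Expansions of all the quantities of half 2 modulo `e ^ 3`. -/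
lemma tr_half2 {e S x i ρ ϖ ω : B} (ti : Tr e i 1 1 1)
    (tr : Tr e ρ (1 * x)
      (2 * S * x + 2 * S * x ^ 2)
      (4 * S ^ 2 * x + 8 * S ^ 2 * x ^ 2 + 4 * S ^ 2 * x ^ 3))
    (tp : Tr e ϖ (4 - 4 * x)
      (8 * S - 16 * S * x + 8 * S * x ^ 2)
      (16 * S ^ 2 - 48 * S ^ 2 * x + 48 * S ^ 2 * x ^ 2 - 16 * S ^ 2 * x ^ 3))
    (tw : Tr e ω (4 - 4 * x)
      (- 8 * S + 16 * S * x - 8 * S * x ^ 2)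
      (16 * S ^ 2 - 48 * S ^ 2 * x + 48 * S ^ 2 * x ^ 2 - 16 * S ^ 2 * x ^ 3)) :
    Tr e (fDel e S i ρ ω) (4 - 2 * x)
      (32 - 32 * x - 8 * S + 36 * S * x - 16 * S * x ^ 2)
      (120 - 120 * x - 64 * S + 176 * S * x - 112 * S * x ^ 2 + 16 * S ^ 2 - 40 * S ^ 2 * x + 136 * S ^ 2 * x ^ 2 - 48 * S ^ 2 * x ^ 3) ∧
    Tr e (fEta e S i ρ) (2 * x)
      (- 4 * x + 4 * S * x + 3 * S * x ^ 2)
      (- 6 * x - 8 * S * x - 11 * S * x ^ 2 + 8 * S ^ 2 * x + 12 * S ^ 2 * x ^ 2 + 4 * S ^ 2 * x ^ 3) ∧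
    Tr e (fN e S i ρ ϖ ω) (4 - 2 * x)
      (28 - 24 * x - 8 * S + 20 * S * x - 5 * S * x ^ 2)
      (88 - 88 * x - 56 * S + 104 * S * x - 39 * S * x ^ 2 + 16 * S ^ 2 - 40 * S ^ 2 * x + 52 * S ^ 2 * x ^ 2 - 6 * S ^ 2 * x ^ 3) ∧
    Tr e (fM e S i ρ ϖ) (4 - 2 * x)
      (12 - 16 * x + 8 * S - 4 * S * x + 3 * S * x ^ 2)
      (12 - 18 * x + 24 * S - 72 * S * x + 29 * S * x ^ 2 + 16 * S ^ 2 - 8 * S ^ 2 * x + 24 * S ^ 2 * x ^ 2 - 8 * S ^ 2 * x ^ 3) := by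
  have c1 := Tr.const e (1 : B)
  have c2 := Tr.const e (2 : B)
  have c3 := Tr.const e (3 : B)
  have ve := Tr.var e
  have tS := (Tr.const e S).mul ve
  have tg := tr_g ti
  have tm := tr_m ti
  have teta : Tr e (fEta e S i ρ) (2 * x)
      (- 4 * x + 4 * S * x + 3 * S * x ^ 2)
      (- 6 * x - 8 * S * x - 11 * S * x ^ 2 + 8 * S ^ 2 * x + 12 * S ^ 2 * x ^ 2 + 4 * S ^ 2 * x ^ 3) :=
    (tr.mul (c3.sub (tg.mul ((c1.add ve).add (tS.mul tr))))).congr rfl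
      (by ring) (by ring) (by ring)
  have tnu : Tr e (fNu e S i ρ) (2 * x)
      (- 2 * x + 4 * S * x + 3 * S * x ^ 2)
      (- 8 * x - 4 * S * x - 8 * S * x ^ 2 + 8 * S ^ 2 * x + 12 * S ^ 2 * x ^ 2 + 4 * S ^ 2 * x ^ 3) :=
    ((((c2.mul ((c1.sub (c3.mul ve)).sub (ve.mul ve))).mul tr).mul (ti.mul ti)).sub ((tm.mul tS).mul (tr.mul tr))).congr rfl
      (by ring) (by ring) (by ring)
  have tta : Tr e (fTau e S i ρ ω) (- 4 + 4 * x)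
      (- 16 + 14 * x + 8 * S - 16 * S * x + 7 * S * x ^ 2)
      (- 28 + 20 * x + 32 * S - 60 * S * x + 16 * S * x ^ 2 - 16 * S ^ 2 + 48 * S ^ 2 * x - 48 * S ^ 2 * x ^ 2 + 8 * S ^ 2 * x ^ 3) :=
    ((tnu.sub (c2.mul tr)).sub (tw.mul (tm.add (tS.mul (tnu.sub (c2.mul tr)))))).congr rfl
      (by ring) (by ring) (by ring)
  have tde : Tr e (fDel e S i ρ ω) (4 - 2 * x)
      (32 - 32 * x - 8 * S + 36 * S * x - 16 * S * x ^ 2)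
      (120 - 120 * x - 64 * S + 176 * S * x - 112 * S * x ^ 2 + 16 * S ^ 2 - 40 * S ^ 2 * x + 136 * S ^ 2 * x ^ 2 - 48 * S ^ 2 * x ^ 3) :=
    ((((((tm.mul (tnu.sub (c2.mul tta))).add (tnu.mul (c1.sub tm))).add (tS.mul (tnu.mul (tnu.sub (c2.mul tta))))).add ((tnu.sub (c2.mul tr)).mul (tm.sub c1))).add (tm.mul tta)).add (tS.mul ((tnu.sub (c2.mul tr)).mul tta))).congr rfl
      (by ring) (by ring) (by ring)
  have tA : Tr e (fA e S i ρ ϖ ω) (8 - 6 * x)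
      (32 - 32 * x - 16 * S + 36 * S * x - 12 * S * x ^ 2)
      (56 - 56 * x - 64 * S + 112 * S * x - 48 * S * x ^ 2 + 32 * S ^ 2 - 88 * S ^ 2 * x + 104 * S ^ 2 * x ^ 2 - 16 * S ^ 2 * x ^ 3) :=
    ((c2.mul tr).add ((c2.mul tp).mul (tm.add (tS.mul tta)))).congr rfl
      (by ring) (by ring) (by ring)
  have tN : Tr e (fN e S i ρ ϖ ω) (4 - 2 * x)
      (28 - 24 * x - 8 * S + 20 * S * x - 5 * S * x ^ 2)
      (88 - 88 * x - 56 * S + 104 * S * x - 39 * S * x ^ 2 + 16 * S ^ 2 - 40 * S ^ 2 * x + 52 * S ^ 2 * x ^ 2 - 6 * S ^ 2 * x ^ 3) :=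
    (((teta.add (tg.mul tA)).add (tS.mul (teta.mul tA))).sub ((c1.sub ve).mul tde)).congr rfl
      (by ring) (by ring) (by ring)
  have tM : Tr e (fM e S i ρ ϖ) (4 - 2 * x)
      (12 - 16 * x + 8 * S - 4 * S * x + 3 * S * x ^ 2)
      (12 - 18 * x + 24 * S - 72 * S * x + 29 * S * x ^ 2 + 16 * S ^ 2 - 8 * S ^ 2 * x + 24 * S ^ 2 * x ^ 2 - 8 * S ^ 2 * x ^ 3) :=
    ((teta.add (tg.mul tp)).add (tS.mul (teta.mul tp))).congr rfl
      (by ring) (by ring) (by ring)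
  exact ⟨tde, teta, tN, tM⟩

def fDet (e S i N1 N2 M1 M2 : B) : B :=
  fg e i * (N1 + N2 - M1 - M2) + S * e * (N1 * N2 - M1 * M2)

lemma tr_all {e S x i iP iQ wP wQ : B} (hi : i * (1 - e) = 1)
    (hP : iP * (1 - 2 * (S * (1 + x)) * e) = 1)
    (hQ : iQ * (1 - 2 * (S * (1 - x)) * e) = 1)
    (hwP : wP * (1 + 2 * (S * (1 + x)) * e) = 1)
    (hwQ : wQ * (1 + 2 * (S * (1 - x)) * e) = 1) :
    (∃ t : B, fDel e S i (-3 * x * iQ) (4 * (1 + x) * wP) = 4 - 2 * x + e * t) ∧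
    (∃ t : B, fDel e S i (x * iP) (4 * (1 - x) * wQ) = 4 - 2 * x + e * t) ∧
      ∃ T : B, fDet e S i (fN e S i (-3 * x * iQ) (4 * (1 + x) * iP) (4 * (1 + x) * wP))
        (fN e S i (x * iP) (4 * (1 - x) * iQ) (4 * (1 - x) * wQ))
        (fM e S i (-3 * x * iQ) (4 * (1 + x) * iP))
        (fM e S i (x * iP) (4 * (1 - x) * iQ)) =
        (32 - 16 * x - 32 * S + 16 * S * x) * e
        + (248 - 60 * x - 128 * S - 112 * S * x - 104 * S * x ^ 2 - 128 * S ^ 2 + 192 * S ^ 2 * x + 56 * S ^ 2 * x ^ 2 + 20 * S ^ 2 * x ^ 3) * e ^ 2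
        + e ^ 3 * T := by
  have ti : Tr e i 1 1 1 := (Tr.geom (c := 1) (by linear_combination hi)).congr rfl
    rfl rfl (by ring)
  have tP := Tr.geom hP
  have tQ := Tr.geom hQ
  have twP : Tr e wP 1 (-(2 * (S * (1 + x)))) _ := Tr.geom (by linear_combination hwP)
  have twQ : Tr e wQ 1 (-(2 * (S * (1 - x)))) _ := Tr.geom (by linear_combination hwQ)
  have cP := Tr.const e (4 * (1 + x))
  have cQ := Tr.const e (4 * (1 - x))
  obtain ⟨d1, h1, n1, m1⟩ := tr_half1 (S := S) (x := x) ti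
    (((Tr.const e (-3 * x)).mul tQ).congr rfl (by ring) (by ring) (by ring))
    ((cP.mul tP).congr rfl (by ring) (by ring) (by ring))
    ((cP.mul twP).congr rfl (by ring) (by ring) (by ring))
  obtain ⟨d2, h2, n2, m2⟩ := tr_half2 (S := S) (x := x) ti
    (((Tr.const e x).mul tP).congr rfl (by ring) (by ring) (by ring))
    ((cQ.mul tQ).congr rfl (by ring) (by ring) (by ring))
    ((cQ.mul twQ).congr rfl (by ring) (by ring) (by ring))
  have tdet := ((tr_g ti).mul (((n1.add n2).sub m1).sub m2)).add
    (((Tr.const e S).mul (Tr.var e)).mul ((n1.mul n2).sub (m1.mul m2)))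
  obtain ⟨T, hT⟩ := tdet
  refine ⟨d1.first, d2.first, T, ?_⟩
  rw [fDet, hT]; ring
end Ring

section Maps
variable {B C : Type*} [CommRing B] [CommRing C] (φ : B →+* C)

lemma map_fg (e i : B) : φ (fg e i) = fg (φ e) (φ i) := by simp [fg, map_ofNat]
lemma map_fm (e i : B) : φ (fm e i) = fm (φ e) (φ i) := by simp [fm, map_ofNat]
lemma map_fEta (e S i ρ : B) : φ (fEta e S i ρ) = fEta (φ e) (φ S) (φ i) (φ ρ) := by
  simp [fEta, map_fg, map_ofNat]
lemma map_fNu (e S i ρ : B) : φ (fNu e S i ρ) = fNu (φ e) (φ S) (φ i) (φ ρ) := by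
  simp [fNu, map_fm, map_ofNat]
lemma map_fTau (e S i ρ ω : B) :
    φ (fTau e S i ρ ω) = fTau (φ e) (φ S) (φ i) (φ ρ) (φ ω) := by
  simp [fTau, map_fm, map_fNu, map_ofNat]
lemma map_fDel (e S i ρ ω : B) :
    φ (fDel e S i ρ ω) = fDel (φ e) (φ S) (φ i) (φ ρ) (φ ω) := by
  simp [fDel, map_fm, map_fNu, map_fTau, map_ofNat]
lemma map_fA (e S i ρ ϖ ω : B) :
    φ (fA e S i ρ ϖ ω) = fA (φ e) (φ S) (φ i) (φ ρ) (φ ϖ) (φ ω) := by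
  simp [fA, map_fm, map_fTau, map_ofNat]
lemma map_fN (e S i ρ ϖ ω : B) :
    φ (fN e S i ρ ϖ ω) = fN (φ e) (φ S) (φ i) (φ ρ) (φ ϖ) (φ ω) := by
  simp [fN, map_fg, map_fEta, map_fA, map_fDel, map_ofNat]
lemma map_fM (e S i ρ ϖ : B) :
    φ (fM e S i ρ ϖ) = fM (φ e) (φ S) (φ i) (φ ρ) (φ ϖ) := by
  simp [fM, map_fg, map_fEta, map_ofNat]
lemma map_fDet (e S i N1 N2 M1 M2 : B) :
    φ (fDet e S i N1 N2 M1 M2) = fDet (φ e) (φ S) (φ i) (φ N1) (φ N2) (φ M1) (φ M2) := by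
  simp [fDet, map_fg, map_ofNat]
end Maps

/-- Parameter domain. -/
structure Dom where
  e : ℝ
  S : ℝ
  x : ℝ
  he0 : 0 ≤ e
  he1 : e ≤ 1 / 100
  hS0 : 0 ≤ S
  hS1 : S ≤ 1
  hx0 : 0 ≤ x
  hx1 : x ≤ 1

/-- The ring of bounded functions on the parameter domain. -/
def bd : Subring (Dom → ℝ) where
  carrier := {f | ∃ K, ∀ z, |f z| ≤ K}
  mul_mem' := by
    rintro f g ⟨K, hK⟩ ⟨L, hL⟩
    refine ⟨K * L, fun z => ?_⟩
    rw [Pi.mul_apply, abs_mul]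
    exact mul_le_mul (hK z) (hL z) (abs_nonneg _) ((abs_nonneg _).trans (hK z))
  one_mem' := ⟨1, fun z => by simp⟩
  add_mem' := by
    rintro f g ⟨K, hK⟩ ⟨L, hL⟩
    refine ⟨K + L, fun z => ?_⟩
    exact (abs_add_le _ _).trans (add_le_add (hK z) (hL z))
  zero_mem' := ⟨0, fun z => by simp⟩
  neg_mem' := by
    rintro f ⟨K, hK⟩
    exact ⟨K, fun z => by simpa using hK z⟩

/-- Evaluation at a parameter. -/
def ev (z : Dom) : bd →+* ℝ := (Pi.evalRingHom (fun _ : Dom => ℝ) z).comp bd.subtype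

lemma ev_bdd (f : bd) : ∃ K, ∀ z, |ev z f| ≤ K := f.2

lemma inv_mem {f : Dom → ℝ} (h : ∀ z, 1 / 2 ≤ f z) : (fun z => (f z)⁻¹) ∈ bd := by
  refine ⟨2, fun z => ?_⟩
  have := h z
  rw [abs_of_pos (by positivity), inv_le_comm₀ (by linarith) (by norm_num)]
  linarith

lemma Dom.aux (z : Dom) : 0 ≤ z.S * (1 + z.x) * z.e ∧ z.S * (1 + z.x) * z.e ≤ 1 / 50 ∧
    0 ≤ z.S * (1 - z.x) * z.e ∧ z.S * (1 - z.x) * z.e ≤ 1 / 50 := by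
  obtain ⟨e, S, x, h1, h2, h3, h4, h5, h6⟩ := z
  simp only
  have a1 : 0 ≤ S * (1 + x) := by positivity
  have a2 : 0 ≤ S * (1 - x) := mul_nonneg h3 (by linarith)
  have a3 : S * (1 + x) ≤ 2 := by nlinarith
  have a4 : S * (1 - x) ≤ 2 := by nlinarith
  refine ⟨by positivity, ?_, by positivity, ?_⟩ <;> nlinarith

lemma bounds : ∃ K : ℝ, 0 < K ∧ ∀ e S x i iP iQ wP wQ : ℝ, 0 ≤ e → e ≤ 1 / 100 →
    0 ≤ S → S ≤ 1 → 0 ≤ x → x ≤ 1 → i * (1 - e) = 1 →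
    iP * (1 - 2 * (S * (1 + x)) * e) = 1 →
    iQ * (1 - 2 * (S * (1 - x)) * e) = 1 →
    wP * (1 + 2 * (S * (1 + x)) * e) = 1 →
    wQ * (1 + 2 * (S * (1 - x)) * e) = 1 →
    |fEta e S i (-3 * x * iQ)| ≤ K ∧ |fEta e S i (x * iP)| ≤ K ∧
    |fN e S i (-3 * x * iQ) (4 * (1 + x) * iP) (4 * (1 + x) * wP)| ≤ K ∧
    |fN e S i (x * iP) (4 * (1 - x) * iQ) (4 * (1 - x) * wQ)| ≤ K ∧
    (∃ t, |t| ≤ K ∧ fDel e S i (-3 * x * iQ) (4 * (1 + x) * wP) = 4 - 2 * x + e * t) ∧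
    (∃ t, |t| ≤ K ∧ fDel e S i (x * iP) (4 * (1 - x) * wQ) = 4 - 2 * x + e * t) ∧
    ∃ T, |T| ≤ K ∧ fDet e S i (fN e S i (-3 * x * iQ) (4 * (1 + x) * iP) (4 * (1 + x) * wP))
        (fN e S i (x * iP) (4 * (1 - x) * iQ) (4 * (1 - x) * wQ))
        (fM e S i (-3 * x * iQ) (4 * (1 + x) * iP))
        (fM e S i (x * iP) (4 * (1 - x) * iQ)) =
        (32 - 16 * x - 32 * S + 16 * S * x) * e
        + (248 - 60 * x - 128 * S - 112 * S * x - 104 * S * x ^ 2 - 128 * S ^ 2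
          + 192 * S ^ 2 * x + 56 * S ^ 2 * x ^ 2 + 20 * S ^ 2 * x ^ 3) * e ^ 2
        + e ^ 3 * T := by
  let e' : bd := ⟨fun z => z.e, 1, fun z => by rw [abs_of_nonneg z.he0]; linarith [z.he1]⟩
  let S' : bd := ⟨fun z => z.S, 1, fun z => by rw [abs_of_nonneg z.hS0]; exact z.hS1⟩
  let x' : bd := ⟨fun z => z.x, 1, fun z => by rw [abs_of_nonneg z.hx0]; exact z.hx1⟩
  let i' : bd := ⟨fun z => (1 - z.e)⁻¹, inv_mem fun z => by linarith [z.he1]⟩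
  let iP' : bd := ⟨fun z => (1 - 2 * (z.S * (1 + z.x)) * z.e)⁻¹,
    inv_mem fun z => by linarith [z.aux.1, z.aux.2.1]⟩
  let iQ' : bd := ⟨fun z => (1 - 2 * (z.S * (1 - z.x)) * z.e)⁻¹,
    inv_mem fun z => by linarith [z.aux.2.2.1, z.aux.2.2.2]⟩
  let wP' : bd := ⟨fun z => (1 + 2 * (z.S * (1 + z.x)) * z.e)⁻¹,
    inv_mem fun z => by linarith [z.aux.1, z.aux.2.1]⟩
  let wQ' : bd := ⟨fun z => (1 + 2 * (z.S * (1 - z.x)) * z.e)⁻¹,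
    inv_mem fun z => by linarith [z.aux.2.2.1, z.aux.2.2.2]⟩
  have ext' : ∀ f g : bd, (∀ z, ev z f = ev z g) → f = g := fun f g h =>
    Subtype.ext (funext h)
  have he' : ∀ z, ev z e' = z.e := fun z => rfl
  have hS' : ∀ z, ev z S' = z.S := fun z => rfl
  have hx' : ∀ z, ev z x' = z.x := fun z => rfl
  have hi' : ∀ z, ev z i' = (1 - z.e)⁻¹ := fun z => rfl
  have hiP' : ∀ z, ev z iP' = (1 - 2 * (z.S * (1 + z.x)) * z.e)⁻¹ := fun z => rfl
  have hiQ' : ∀ z, ev z iQ' = (1 - 2 * (z.S * (1 - z.x)) * z.e)⁻¹ := fun z => rfl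
  have hwP' : ∀ z, ev z wP' = (1 + 2 * (z.S * (1 + z.x)) * z.e)⁻¹ := fun z => rfl
  have hwQ' : ∀ z, ev z wQ' = (1 + 2 * (z.S * (1 - z.x)) * z.e)⁻¹ := fun z => rfl
  obtain ⟨⟨t0, ht0⟩, ⟨t1, ht1⟩, T, hT⟩ := tr_all (e := e') (S := S') (x := x') (i := i')
    (iP := iP') (iQ := iQ') (wP := wP') (wQ := wQ')
    (ext' _ _ fun z => by
      simp only [map_mul, map_sub, map_add, map_one, map_ofNat, he', hS', hx', hi']
      exact inv_mul_cancel₀ (by linarith [z.he1]))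
    (ext' _ _ fun z => by
      simp only [map_mul, map_sub, map_add, map_one, map_ofNat, he', hS', hx', hiP']
      exact inv_mul_cancel₀ (by linarith [z.aux.1, z.aux.2.1]))
    (ext' _ _ fun z => by
      simp only [map_mul, map_sub, map_add, map_one, map_ofNat, he', hS', hx', hiQ']
      exact inv_mul_cancel₀ (by linarith [z.aux.2.2.1, z.aux.2.2.2]))
    (ext' _ _ fun z => by
      simp only [map_mul, map_sub, map_add, map_one, map_ofNat, he', hS', hx', hwP']
      exact inv_mul_cancel₀ (by linarith [z.aux.1, z.aux.2.1]))
    (ext' _ _ fun z => by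
      simp only [map_mul, map_sub, map_add, map_one, map_ofNat, he', hS', hx', hwQ']
      exact inv_mul_cancel₀ (by linarith [z.aux.2.2.1, z.aux.2.2.2]))
  obtain ⟨K0, hK0⟩ := ev_bdd (fEta e' S' i' (-3 * x' * iQ'))
  obtain ⟨K1, hK1⟩ := ev_bdd (fEta e' S' i' (x' * iP'))
  obtain ⟨K2, hK2⟩ := ev_bdd (fN e' S' i' (-3 * x' * iQ') (4 * (1 + x') * iP') (4 * (1 + x') * wP'))
  obtain ⟨K3, hK3⟩ := ev_bdd (fN e' S' i' (x' * iP') (4 * (1 - x') * iQ') (4 * (1 - x') * wQ'))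
  obtain ⟨K4, hK4⟩ := ev_bdd t0
  obtain ⟨K5, hK5⟩ := ev_bdd t1
  obtain ⟨K6, hK6⟩ := ev_bdd T
  refine ⟨|K0| + |K1| + |K2| + |K3| + |K4| + |K5| + |K6| + 1, by positivity, ?_⟩
  intro e S x i iP iQ wP wQ h1 h2 h3 h4 h5 h6 k1 k2 k3 k4 k5
  have := le_abs_self K0
  have := le_abs_self K1
  have := le_abs_self K2
  have := le_abs_self K3
  have := le_abs_self K4
  have := le_abs_self K5
  have := le_abs_self K6
  have := abs_nonneg K0
  have := abs_nonneg K1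
  have := abs_nonneg K2
  have := abs_nonneg K3
  have := abs_nonneg K4
  have := abs_nonneg K5
  have := abs_nonneg K6
  let z : Dom := ⟨e, S, x, h1, h2, h3, h4, h5, h6⟩
  have ee : ev z e' = e := rfl
  have eS : ev z S' = S := rfl
  have ex : ev z x' = x := rfl
  have ei : ev z i' = i := (eq_inv_of_mul_eq_one_left k1).symm
  have eiP : ev z iP' = iP := (eq_inv_of_mul_eq_one_left k2).symm
  have eiQ : ev z iQ' = iQ := (eq_inv_of_mul_eq_one_left k3).symm
  have ewP : ev z wP' = wP := (eq_inv_of_mul_eq_one_left k4).symm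
  have ewQ : ev z wQ' = wQ := (eq_inv_of_mul_eq_one_left k5).symm
  have b0 := hK0 z
  have b1 := hK1 z
  have b2 := hK2 z
  have b3 := hK3 z
  have b4 := hK4 z
  have b5 := hK5 z
  have b6 := hK6 z
  have q0 := congrArg (ev z) ht0
  have q1 := congrArg (ev z) ht1
  have q2 := congrArg (ev z) hT
  simp only [map_fEta, map_fN, map_fM, map_fDel, map_fDet, map_mul, map_add, map_sub, map_neg,
    map_one, map_pow, map_ofNat, ee, eS, ex, ei, eiP, eiQ, ewP, ewQ] at b0 b1 b2 b3 q0 q1 q2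
  refine ⟨by linarith, by linarith, by linarith, by linarith, ⟨_, by linarith, q0⟩,
    ⟨_, by linarith, q1⟩, _, by linarith, q2⟩

/-- Exact identities for one half. -/
lemma half_exact {n e S i ρ ϖ ω r p k m θ δ : ℝ} (hn : n ≠ 0) (he : e = 1 / n)
    (hi : i * (1 - e) = 1) (hpw : (1 + S * e * ϖ) * (1 - S * e * ω) = 1)
    (hr : r = 2 * (S * e * ρ)) (hp : p = 1 + S * e * ϖ)
    (hk : k = n / (2 * (n - 1)) * (r - 2 + r / n + r ^ 2 / 2))
    (hm : m = ((n + 2) * n + (n ^ 2 - 3 * n - 1) * r - (n * (n + 2) / 4) * r ^ 2) / (n - 1) ^ 2)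
    (hθ : θ = (m - r) / p)
    (hδ : δ = (r + θ * p) * (r + θ * (p - 2) + 1) + θ * (θ - 1) * p) :
    (3 / 2) * r - (n + 2) / n * k = fg e i + S * e * fEta e S i ρ ∧
    δ = S * e * fDel e S i ρ ω ∧
    ((3 / 2) * r - (n + 2) / n * k) * (2 * θ * (p - 1) + r + 1) - (n - 1) / n * δ
      = fg e i + S * e * fN e S i ρ ϖ ω ∧
    ((3 / 2) * r - (n + 2) / n * k) * p = fg e i + S * e * fM e S i ρ ϖ := by
  have hen : e * n = 1 := by rw [he]; field_simp
  have h1e : 1 - e ≠ 0 := right_ne_zero_of_mul_eq_one hi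
  have hn1 : n - 1 ≠ 0 := by
    intro h
    apply h1e
    linear_combination -hen + e * h
  have hni : n / (n - 1) = i := by
    rw [div_eq_iff hn1]
    linear_combination (-n) * hi - i * hen
  have hrn : r / n = r * e := by rw [he]; ring
  have hk' : k = i * (S * e * ρ - 1 + S * e * ρ * e + (S * e * ρ) ^ 2) := by
    have : n / (2 * (n - 1)) = i / 2 := by rw [← hni]; field_simp
    rw [hk, this, hrn, hr]; ring
  have hn2 : (n + 2) / n = 1 + 2 * e := by rw [he]; field_simp
  have hn3 : (n - 1) / n = 1 - e := by rw [he]; field_simp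
  have hm' : m = fm e i + S * e * fNu e S i ρ := by
    have : m = ((1 + 2 * e) + (1 - 3 * e - e ^ 2) * r - (1 + 2 * e) / 4 * r ^ 2)
        * (n / (n - 1)) ^ 2 := by
      rw [hm, he]; field_simp
    rw [this, hni, hr, fNu, fm]; ring
  have hp0 : p ≠ 0 := by rw [hp]; exact left_ne_zero_of_mul_eq_one hpw
  have hθ' : θ = fm e i + S * e * fTau e S i ρ ω := by
    have : θ = (m - r) * (1 - S * e * ω) := by
      rw [hθ, div_eq_iff hp0, hp]
      linear_combination (-(m - r)) * hpw
    rw [this, hm', hr, fTau]; ring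
  have hθp : θ * p = m - r := by rw [hθ]; field_simp
  have hh : (3 / 2) * r - (n + 2) / n * k = fg e i + S * e * fEta e S i ρ := by
    rw [hn2, hk', hr, fEta, fg]; ring
  have hd : δ = S * e * fDel e S i ρ ω := by
    have : δ = m * (m - 2 * θ + 1) + (m - r) * (θ - 1) := by
      rw [hδ]
      linear_combination (r + θ * p + m - r + θ - 1 + r - 2 * θ + 1 - r + r) * hθp
    rw [this, hm', hθ', hr, fDel]; ring
  refine ⟨hh, hd, ?_, ?_⟩
  · rw [hh, hd, hn3, hθ', hp, hr, fN, fA]; ring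
  · rw [hh, hp, fM]; ring

lemma alpha_pos {n e r k : ℝ} (hn : 100 ≤ n) (he : e = 1 / n) (hr : r ≠ 0) (hr1 : |r| ≤ 14 * e)
    (hk : k = n / (2 * (n - 1)) * (r - 2 + r / n + r ^ 2 / 2)) :
    0 < -((n - 1) / n) * k ^ 2 + k * (r - 1) - r * (r - 1) / 2 := by
  have hn0 : 0 < n := by linarith
  have e0 : 0 < e := by rw [he]; positivity
  have e1 : e ≤ 1 / 100 := by rw [he]; exact one_div_le_one_div_of_le (by norm_num) hn
  have hne : n = 1 / e := by rw [he]; field_simp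
  have h1 : 0 < 1 - e := by linarith
  have hkk : k = (r - 2 + r * e + r ^ 2 / 2) / (2 * (1 - e)) := by
    have : n - 1 ≠ 0 := by linarith
    rw [hk, he]
    field_simp
  have key : -((n - 1) / n) * k ^ 2 + k * (r - 1) - r * (r - 1) / 2
      = r ^ 2 * (8 * e - (2 * e + r) ^ 2) / (16 * (1 - e)) := by
    have h3 : (n - 1) / n = 1 - e := by rw [he]; field_simp
    rw [h3, hkk]
    field_simp
    ring
  rw [key]
  have h4 : (2 * e + r) ^ 2 ≤ 256 * e ^ 2 := by
    have := abs_le.1 hr1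
    nlinarith
  have h5 : 0 < 8 * e - (2 * e + r) ^ 2 := by nlinarith
  have h6 : 0 < r ^ 2 := by positivity
  positivity

lemma G_nonneg {S x : ℝ} (h3 : 0 ≤ S) (h4 : S ≤ 1) (h5 : 0 ≤ x) (h6 : x ≤ 1) :
    0 ≤ 248 - 60 * x - 128 * S - 112 * S * x - 104 * S * x ^ 2 - 128 * S ^ 2
          + 192 * S ^ 2 * x + 56 * S ^ 2 * x ^ 2 + 20 * S ^ 2 * x ^ 3 + 16 * (2 - x) := by
  have k1 : 0 ≤ (1 - x) * (24 + 28 * x - 20 * x ^ 2) :=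
    mul_nonneg (by linarith) (by nlinarith)
  have x2 : x ^ 2 ≤ 1 := by nlinarith
  have x3 : x ^ 3 ≤ 1 := by nlinarith
  have b1 : 0 ≤ 256 - 80 * x + 48 * x ^ 2 - 20 * x ^ 3 := by nlinarith [sq_nonneg x]
  have b2 : 0 ≤ 384 - 272 * x - 8 * x ^ 2 - 40 * x ^ 3 := by nlinarith
  have k2 : 0 ≤ (1 - S) * ((1 - S) * (256 - 80 * x + 48 * x ^ 2 - 20 * x ^ 3)
      + S * (384 - 272 * x - 8 * x ^ 2 - 40 * x ^ 3)) := by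
    have : 0 ≤ 1 - S := by linarith
    positivity
  linear_combination k1 + k2

lemma det_core {e S x c K T : ℝ} (he : 0 < e) (h3 : 0 ≤ S) (h4 : S ≤ 1) (h5 : 0 ≤ x)
    (h6 : x ≤ 1) (hc : 2 < c) (hS : c * e ≤ 2 - 2 * S) (hT : |T| ≤ K) (hK : K * e < c - 2) :
    0 < (32 - 16 * x - 32 * S + 16 * S * x) * e
        + (248 - 60 * x - 128 * S - 112 * S * x - 104 * S * x ^ 2 - 128 * S ^ 2
          + 192 * S ^ 2 * x + 56 * S ^ 2 * x ^ 2 + 20 * S ^ 2 * x ^ 3) * e ^ 2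
        + e ^ 3 * T := by
  have hG := mul_nonneg (G_nonneg h3 h4 h5 h6) (sq_nonneg e)
  have h1 : 0 ≤ (2 - x) * (2 - 2 * S - c * e) * e :=
    mul_nonneg (mul_nonneg (by linarith) (by linarith)) he.le
  have hT' : -K ≤ T := (abs_le.1 hT).1
  have h2 : 0 ≤ e ^ 3 * (T + K) := mul_nonneg (by positivity) (by linarith)
  have h7 : 0 < e ^ 2 * (c - 2 - K * e) := mul_pos (by positivity) (by linarith)
  have h8 : 0 ≤ (1 - x) * (c - 2) * e ^ 2 :=
    mul_nonneg (mul_nonneg (by linarith) (by linarith)) (sq_nonneg e)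
  have h9 : 0 ≤ (c - 2) * e ^ 2 := mul_nonneg (by linarith) (sq_nonneg e)
  nlinarith

lemma pos_of_small {g y K e S : ℝ} (hg : 1 ≤ g) (hy : |y| ≤ K) (he : 0 < e) (hS0 : 0 ≤ S)
    (hS : S ≤ 1) (hK : K * e < 1) : 0 < g + S * e * y := by
  have h1 : |S * e * y| ≤ 1 * e * K := by
    rw [abs_mul, abs_of_nonneg (by positivity : 0 ≤ S * e)]
    gcongr
  have := (abs_le.1 h1).1
  linarith

end PosCond

set_option maxHeartbeats 1000000 in
theorem positivity_condition_large_n (c₀ : ℝ) (hc₀ : 2 < c₀) :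
    ∃ N : ℕ, 0 < N ∧ ∀ n : ℕ, N ≤ n → ∀ d₁ d₂ : ℝ,
      0 ≤ d₂ → d₂ < d₁ → d₁ ≤ 2 - d₂ - c₀ / (n : ℝ) →
      ∀ p q r s k₁ k₂ μr μs θ₁ θ₂ δ₁ δ₂ α₁ α₂ β₁ β₂ γ₁ γ₂ : ℝ,
        1 / (p + 1) = 1 / 2 - d₁ / (n : ℝ) →
        1 / (q + 1) = 1 / 2 - d₂ / (n : ℝ) →
        r = -3 * (d₁ - d₂) / ((n : ℝ) - 2 * d₂) →
        s = (d₁ - d₂) / ((n : ℝ) - 2 * d₁) →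
        k₁ = (n : ℝ) / (2 * ((n : ℝ) - 1)) * (r - 2 + r / (n : ℝ) + r ^ 2 / 2) →
        k₂ = (n : ℝ) / (2 * ((n : ℝ) - 1)) * (s - 2 + s / (n : ℝ) + s ^ 2 / 2) →
        μr = (((n : ℝ) + 2) * (n : ℝ) + ((n : ℝ) ^ 2 - 3 * (n : ℝ) - 1) * r
            - ((n : ℝ) * ((n : ℝ) + 2) / 4) * r ^ 2) / ((n : ℝ) - 1) ^ 2 →
        μs = (((n : ℝ) + 2) * (n : ℝ) + ((n : ℝ) ^ 2 - 3 * (n : ℝ) - 1) * s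
            - ((n : ℝ) * ((n : ℝ) + 2) / 4) * s ^ 2) / ((n : ℝ) - 1) ^ 2 →
        θ₁ = (μr - r) / p →
        θ₂ = (μs - s) / q →
        δ₁ = (r + θ₁ * p) * (r + θ₁ * (p - 2) + 1) + θ₁ * (θ₁ - 1) * p →
        δ₂ = (s + θ₂ * q) * (s + θ₂ * (q - 2) + 1) + θ₂ * (θ₂ - 1) * q →
        α₁ = -(((n : ℝ) - 1) / n) * k₁ ^ 2 + k₁ * (r - 1) - r * (r - 1) / 2 →
        α₂ = -(((n : ℝ) - 1) / n) * k₂ ^ 2 + k₂ * (s - 1) - s * (s - 1) / 2 →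
        β₁ = ((3 / 2) * r - ((n : ℝ) + 2) / n * k₁) *
            (2 * θ₁ * (p - 1) + r + 1) / δ₁ - ((n : ℝ) - 1) / n →
        β₂ = ((3 / 2) * s - ((n : ℝ) + 2) / n * k₂) *
            (2 * θ₂ * (q - 1) + s + 1) / δ₂ - ((n : ℝ) - 1) / n →
        γ₁ = ((3 / 2) * r - ((n : ℝ) + 2) / n * k₁) * p / δ₁ →
        γ₂ = ((3 / 2) * s - ((n : ℝ) + 2) / n * k₂) * q / δ₂ →
        0 < α₁ ∧ 0 < α₂ ∧ 0 < β₁ ∧ 0 < β₂ ∧ 0 < γ₁ ∧ 0 < γ₂ ∧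
          0 < β₁ * β₂ - γ₁ * γ₂ := by
  obtain ⟨K, hK0, hK⟩ := PosCond.bounds
  refine ⟨⌈100 + K + K / (c₀ - 2)⌉₊ + 1, Nat.succ_pos _, ?_⟩
  intro m hm d₁ d₂ hd2 hd12 hd p q r s k₁ k₂ μr μs θ₁ θ₂ δ₁ δ₂ α₁ α₂ β₁ β₂ γ₁ γ₂
    hp hq hr hs hk1 hk2 hmr hms ht1 ht2 hδ1 hδ2 hα1 hα2 hβ1 hβ2 hγ1 hγ2
  have hc : 0 < c₀ - 2 := by linarith
  have hnN : 100 + K + K / (c₀ - 2) < (m : ℝ) := by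
    have h1 := Nat.le_ceil (100 + K + K / (c₀ - 2))
    have h2 : ((⌈100 + K + K / (c₀ - 2)⌉₊ + 1 : ℕ) : ℝ) ≤ m := by exact_mod_cast hm
    push_cast at h2
    linarith
  generalize (m : ℝ) = n at *
  have hKc : 0 < K / (c₀ - 2) := by positivity
  have hn100 : 100 ≤ n := by linarith
  have hn0 : 0 < n := by linarith
  obtain ⟨e, he⟩ : ∃ e, e = 1 / n := ⟨_, rfl⟩
  have e0 : 0 < e := by rw [he]; positivity
  have hen : e * n = 1 := by rw [he]; field_simp
  have e1 : e ≤ 1 / 100 := by rw [he]; exact one_div_le_one_div_of_le (by norm_num) hn100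
  have hKe : K * e < 1 := by
    rw [he, mul_one_div, div_lt_one hn0]; linarith
  have hKe2 : K * e < c₀ - 2 := by
    rw [he, mul_one_div, div_lt_iff₀ hn0, mul_comm, ← div_lt_iff₀ hc]; linarith
  have hce : c₀ / n = c₀ * e := by rw [he]; ring
  rw [hce] at hd
  have hce0 : 0 < c₀ * e := by positivity
  obtain ⟨S, hS⟩ : ∃ S, S = (d₁ + d₂) / 2 := ⟨_, rfl⟩
  obtain ⟨x, hx⟩ : ∃ x, x = (d₁ - d₂) / (d₁ + d₂) := ⟨_, rfl⟩
  have hd1 : 0 < d₁ := by linarith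
  have hS0 : 0 < S := by rw [hS]; linarith
  have hS1 : S ≤ 1 := by rw [hS]; linarith
  have hx0 : 0 < x := by rw [hx]; exact div_pos (by linarith) (by linarith)
  have hx1 : x ≤ 1 := by rw [hx, div_le_one (by linarith)]; linarith
  have hSx : S * x = (d₁ - d₂) / 2 := by
    rw [hS, hx]
    have : d₁ + d₂ ≠ 0 := by linarith
    field_simp
  have ha : S * (1 + x) = d₁ := by linear_combination hSx + hS
  have hb : S * (1 - x) = d₂ := by linear_combination hS - hSx
  have d1e : d₁ * e ≤ 1 / 50 := by
    have := mul_le_mul (by linarith : d₁ ≤ 2) e1 e0.le zero_le_two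
    linarith
  have d2e : d₂ * e ≤ 1 / 50 := by
    have := mul_le_mul (by linarith : d₂ ≤ 2) e1 e0.le zero_le_two
    linarith
  have d2e0 : 0 ≤ d₂ * e := by positivity
  have d1e0 : 0 < d₁ * e := by positivity
  have i1 : (1 - e)⁻¹ * (1 - e) = 1 := inv_mul_cancel₀ (by linarith)
  have i2 : (1 - 2 * d₁ * e)⁻¹ * (1 - 2 * d₁ * e) = 1 := inv_mul_cancel₀ (by linarith)
  have i3 : (1 - 2 * d₂ * e)⁻¹ * (1 - 2 * d₂ * e) = 1 := inv_mul_cancel₀ (by linarith)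
  have i4 : (1 + 2 * d₁ * e)⁻¹ * (1 + 2 * d₁ * e) = 1 := inv_mul_cancel₀ (by linarith)
  have i5 : (1 + 2 * d₂ * e)⁻¹ * (1 + 2 * d₂ * e) = 1 := inv_mul_cancel₀ (by linarith)
  have hi1 : 1 ≤ (1 - e)⁻¹ := (one_le_inv₀ (by linarith)).2 (by linarith)
  have iP0 : 0 < (1 - 2 * d₁ * e)⁻¹ := inv_pos.2 (by linarith)
  have iQ0 : 0 < (1 - 2 * d₂ * e)⁻¹ := inv_pos.2 (by linarith)
  have iP2 : (1 - 2 * d₁ * e)⁻¹ ≤ 2 := by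
    have := inv_anti₀ (by norm_num : (0 : ℝ) < 1 / 2)
      (by linarith : 1 / 2 ≤ 1 - 2 * d₁ * e)
    norm_num at this ⊢
    exact this
  have iQ2 : (1 - 2 * d₂ * e)⁻¹ ≤ 2 := by
    have := inv_anti₀ (by norm_num : (0 : ℝ) < 1 / 2)
      (by linarith : 1 / 2 ≤ 1 - 2 * d₂ * e)
    norm_num at this ⊢
    exact this
  generalize (1 - e)⁻¹ = i at *
  generalize (1 - 2 * d₁ * e)⁻¹ = iP at *
  generalize (1 - 2 * d₂ * e)⁻¹ = iQ at *
  generalize (1 + 2 * d₁ * e)⁻¹ = wP at *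
  generalize (1 + 2 * d₂ * e)⁻¹ = wQ at *
  obtain ⟨bη1, bη2, bN1, bN2, ⟨t0, bt0, ht0⟩, ⟨t1, bt1, ht1'⟩, T, bT, hT⟩ :=
    hK e S x i iP iQ wP wQ e0.le e1 hS0.le hS1 hx0.le hx1 i1
      (by rw [ha]; exact i2) (by rw [hb]; exact i3) (by rw [ha]; exact i4) (by rw [hb]; exact i5)
  -- expressions for p, q, r, s
  have hp' : p = 1 + S * e * (4 * (1 + x) * iP) := by
    have h1 : 1 / (p + 1) = (1 - 2 * d₁ * e) / 2 := by rw [hp, he]; ring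
    have h2 : p + 1 = 2 * iP := by
      have h3 : p + 1 ≠ 0 := by
        intro h; rw [h] at h1; simp at h1; linarith
      rw [div_eq_iff h3] at h1
      linear_combination (-(2 * iP)) * h1 - (p + 1) * i2
    linear_combination h2 - 4 * e * iP * ha + 2 * i2
  have hq' : q = 1 + S * e * (4 * (1 - x) * iQ) := by
    have h1 : 1 / (q + 1) = (1 - 2 * d₂ * e) / 2 := by rw [hq, he]; ring
    have h2 : q + 1 = 2 * iQ := by
      have h3 : q + 1 ≠ 0 := by
        intro h; rw [h] at h1; simp at h1; linarith
      rw [div_eq_iff h3] at h1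
      linear_combination (-(2 * iQ)) * h1 - (q + 1) * i3
    linear_combination h2 - 4 * e * iQ * hb + 2 * i3
  have hr' : r = 2 * (S * e * (-3 * x * iQ)) := by
    have h1 : n - 2 * d₂ ≠ 0 := by linarith
    rw [hr, div_eq_iff h1]
    linear_combination 6 * e * iQ * (n - 2 * d₂) * hSx + 3 * (d₁ - d₂) * iQ * hen
      + 3 * (d₁ - d₂) * i3 - 3 * (d₁ - d₂) * iQ * 0
  have hs' : s = 2 * (S * e * (x * iP)) := by
    have h1 : n - 2 * d₁ ≠ 0 := by linarith
    rw [hs, div_eq_iff h1]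
    linear_combination (-2) * e * iP * (n - 2 * d₁) * hSx - (d₁ - d₂) * iP * hen
      - (d₁ - d₂) * i2
  obtain ⟨A1, A2, A3, A4⟩ := PosCond.half_exact (S := S) (ρ := -3 * x * iQ)
    (ϖ := 4 * (1 + x) * iP) (ω := 4 * (1 + x) * wP) hn0.ne' he i1
    (by
      have h1 : 1 + S * e * (4 * (1 + x) * iP) = (1 + 2 * d₁ * e) * iP := by
        linear_combination 4 * e * iP * ha - i2
      have h2 : 1 - S * e * (4 * (1 + x) * wP) = (1 - 2 * d₁ * e) * wP := by
        linear_combination (-4) * e * wP * ha - i4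
      rw [h1, h2]
      linear_combination i2 * ((1 + 2 * d₁ * e) * wP) + i4) hr' hp' hk1 hmr ht1 hδ1
  obtain ⟨B1, B2, B3, B4⟩ := PosCond.half_exact (S := S) (ρ := x * iP)
    (ϖ := 4 * (1 - x) * iQ) (ω := 4 * (1 - x) * wQ) hn0.ne' he i1
    (by
      have h1 : 1 + S * e * (4 * (1 - x) * iQ) = (1 + 2 * d₂ * e) * iQ := by
        linear_combination 4 * e * iQ * hb - i3
      have h2 : 1 - S * e * (4 * (1 - x) * wQ) = (1 - 2 * d₂ * e) * wQ := by
        linear_combination (-4) * e * wQ * hb - i5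
      rw [h1, h2]
      linear_combination i3 * ((1 + 2 * d₂ * e) * wQ) + i5) hs' hq' hk2 hms ht2 hδ2
  have hg : 1 ≤ PosCond.fg e i := by
    exact one_le_mul_of_one_le_of_one_le (by linarith) hi1
  have hh1 := PosCond.pos_of_small hg bη1 e0 hS0.le hS1 hKe
  have hh2 := PosCond.pos_of_small hg bη2 e0 hS0.le hS1 hKe
  have hN1 := PosCond.pos_of_small hg bN1 e0 hS0.le hS1 hKe
  have hN2 := PosCond.pos_of_small hg bN2 e0 hS0.le hS1 hKe
  have hD1 : 0 < δ₁ := by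
    rw [A2, ht0]
    have := PosCond.pos_of_small (g := 4 - 2 * x) (S := 1) (by linarith) bt0 e0 zero_le_one
      le_rfl hKe
    rw [one_mul] at this
    positivity
  have hD2 : 0 < δ₂ := by
    rw [B2, ht1']
    have := PosCond.pos_of_small (g := 4 - 2 * x) (S := 1) (by linarith) bt1 e0 zero_le_one
      le_rfl hKe
    rw [one_mul] at this
    positivity
  have hp0 : 0 < p := by rw [hp']; positivity
  have hq0 : 0 < q := by
    have : 0 ≤ 1 - x := by linarith
    rw [hq']; positivity
  rw [← A1] at hh1
  rw [← B1] at hh2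
  rw [← A3] at hN1
  rw [← B3] at hN2
  have hdet := PosCond.det_core (T := T) e0 hS0.le hS1 hx0.le hx1 hc₀ (by linarith) bT hKe2
  rw [← hT, PosCond.fDet] at hdet
  have eβ1 : β₁ = ((3 / 2 * r - (n + 2) / n * k₁) * (2 * θ₁ * (p - 1) + r + 1)
      - (n - 1) / n * δ₁) / δ₁ := by
    rw [hβ1, eq_div_iff hD1.ne', sub_mul, div_mul_cancel₀ _ hD1.ne']
  have eβ2 : β₂ = ((3 / 2 * s - (n + 2) / n * k₂) * (2 * θ₂ * (q - 1) + s + 1)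
      - (n - 1) / n * δ₂) / δ₂ := by
    rw [hβ2, eq_div_iff hD2.ne', sub_mul, div_mul_cancel₀ _ hD2.ne']
  have hSxe : 0 < S * e * x := by positivity
  have hSxe1 : S * e * x ≤ e := by
    have h1 : S * x ≤ 1 := mul_le_one₀ hS1 hx0.le hx1
    have h2 := mul_le_mul_of_nonneg_left h1 e0.le
    linarith
  refine ⟨?_, ?_, ?_, ?_, ?_, ?_, ?_⟩
  · rw [hα1]
    have hr0 : 0 < S * e * x * iQ := by positivity
    refine PosCond.alpha_pos hn100 he ?_ ?_ hk1
    · rw [hr']; intro h; linarith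
    · have := mul_le_mul hSxe1 iQ2 iQ0.le e0.le
      rw [hr', abs_le]
      constructor <;> linarith
  · rw [hα2]
    have hr0 : 0 < S * e * x * iP := by positivity
    refine PosCond.alpha_pos hn100 he ?_ ?_ hk2
    · rw [hs']; intro h; linarith
    · have := mul_le_mul hSxe1 iP2 iP0.le e0.le
      rw [hs', abs_le]
      constructor <;> linarith
  · rw [eβ1]; exact div_pos hN1 hD1
  · rw [eβ2]; exact div_pos hN2 hD2
  · rw [hγ1]; positivity
  · rw [hγ2]; positivity
  · rw [eβ1, eβ2, hγ1, hγ2, A3, B3, A4, B4, div_mul_div_comm, div_mul_div_comm, ← sub_div]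
    refine div_pos ?_ (mul_pos hD1 hD2)
    have := mul_pos (mul_pos hS0 e0) hdet
    linear_combination this
end

section
/- For every integer n ≥ 13 and all real d₁, d₂ with 0 ≤ d₂ < d₁ ≤ 2 − d₂ − 4/n, the following holds. Define p, q by 1/(p+1) = 1/2 − d₁/n and 1/(q+1) = 1/2 − d₂/n; set μ(x) = [(n+2)n + (n²−3n−1)x − (n(n+2)/4)x²]/(n−1)²; choose r = −3(d₁−d₂)/(n−2d₂), s = (d₁−d₂)/(n−2d₁), k₁ = (n/(2(n−1)))(r − 2 + r/n + r²/2), k₂ = (n/(2(n−1)))(s − 2 + s/n + s²/2), θ₁ = (μ(r) − r)/p, θ₂ = (μ(s) − s)/q; and define δ₁ = (r + θ₁p)(r + θ₁(p−2) + 1) + θ₁(θ₁−1)p, δ₂ = (s + θ₂q)(s + θ₂(q−2) + 1) + θ₂(θ₂−1)q, α₁ = −((n−1)/n)k₁² + k₁(r−1) − r(r−1)/2, α₂ = −((n−1)/n)k₂² + k₂(s−1) − s(s−1)/2, β₁ = ((3/2)r − ((n+2)/n)k₁)(2θ₁(p−1) + r + 1)/δ₁ − (n−1)/n, β₂ = ((3/2)s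 − ((n+2)/n)k₂)(2θ₂(q−1) + s + 1)/δ₂ − (n−1)/n, γ₁ = ((3/2)r − ((n+2)/n)k₁)·p/δ₁, γ₂ = ((3/2)s − ((n+2)/n)k₂)·q/δ₂. Then α₁ > 0, α₂ > 0, β₁ > 0, β₂ > 0, γ₁ > 0, γ₂ > 0 and β₁β₂ − γ₁γ₂ > 0. -/
open MeasureTheory Real
open scoped InnerProductSpace

set_option maxRecDepth 100000 in
set_option maxHeartbeats 0 in
theorem core_poly_D (m B : ℝ) (hm : 0 ≤ m) (hB : 0 ≤ B) (n d1 d2 t nz N1 N2 Q1 Mr : ℝ)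
    (hn : n = m + 13) (hd2 : d2 = (n - 2) * B) (ht : t = 2 * (n - 2)) (hd1 : d1 = d2 + t)
    (hnz : nz = n ^ 2 * (B + 1)) (hN1 : N1 = nz - 2 * d1) (hN2 : N2 = nz - 2 * d2)
    (hQ1 : Q1 = nz + 2 * d1)
    (hMr : Mr = n * (n + 2) * N2 ^ 2 + (n ^ 2 - 3 * n - 1) * (-3 * t) * N2
      - n * (n + 2) / 4 * (-3 * t) ^ 2) :
    0 < 4 * d1 * Mr ^ 2 + (n - 1) ^ 4 * (N2 ^ 3 * (-3 * t) * Q1 + N2 ^ 2 * (-3 * t) ^ 2 * N1) := by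
  subst hMr hN1 hN2 hQ1 hnz hd1 hd2 ht hn
  ring_nf
  positivity

set_option maxRecDepth 100000 in
set_option maxHeartbeats 0 in
theorem core_poly_W (m B : ℝ) (hm : 0 ≤ m) (hB : 0 ≤ B)
    (n d1 d2 t nz N1 N2 Q1 Q2 Mr Ms E1 E2 : ℝ)
    (hn : n = m + 13) (hd2 : d2 = (n - 2) * B) (ht : t = 2 * (n - 2)) (hd1 : d1 = d2 + t)
    (hnz : nz = n ^ 2 * (B + 1)) (hN1 : N1 = nz - 2 * d1) (hN2 : N2 = nz - 2 * d2)
    (hQ1 : Q1 = nz + 2 * d1) (hQ2 : Q2 = nz + 2 * d2)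
    (hMr : Mr = n * (n + 2) * N2 ^ 2 + (n ^ 2 - 3 * n - 1) * (-3 * t) * N2
      - n * (n + 2) / 4 * (-3 * t) ^ 2)
    (hMs : Ms = n * (n + 2) * N1 ^ 2 + (n ^ 2 - 3 * n - 1) * t * N1
      - n * (n + 2) / 4 * t ^ 2)
    (hE1 : E1 = (Mr - (-3 * t) * N2 * (n - 1) ^ 2) *
      (4 * d1 * Mr + (n - 1) ^ 2 * (Q1 * N2 ^ 2 + (-3 * t) * N2 * N1)))
    (hE2 : E2 = (Ms - t * N1 * (n - 1) ^ 2) *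
      (4 * d2 * Ms + (n - 1) ^ 2 * (Q2 * N1 ^ 2 + t * N1 * N2))) :
    0 < E1 * E2 - Mr * Ms * Q1 ^ 2 * Q2 ^ 2 * (n - 1) ^ 4 * N1 * N2 := by
  subst hE1 hE2 hMr hMs hN1 hN2 hQ1 hQ2 hnz hd1 hd2 ht hn
  ring_nf
  positivity

/-- The function `μ` of the statement. -/
noncomputable def muF (n x : ℝ) : ℝ :=
  ((n + 2) * n + (n ^ 2 - 3 * n - 1) * x - (n * (n + 2) / 4) * x ^ 2) / (n - 1) ^ 2

theorem muF_pos (n x : ℝ) (hn : 13 ≤ n) (h1 : -(1 / 2) ≤ x) (h2 : x ≤ 1 / 4) : 0 < muF n x := by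
  unfold muF
  apply div_pos _ (by nlinarith)
  have hx : x ^ 2 ≤ 1 / 4 := by nlinarith
  have e1 : (n * (n + 2) / 4) * x ^ 2 ≤ (n * (n + 2) / 4) * (1 / 4) :=
    mul_le_mul_of_nonneg_left hx (by positivity)
  have e2 : (n ^ 2 - 3 * n - 1) * (-(1 / 2)) ≤ (n ^ 2 - 3 * n - 1) * x :=
    mul_le_mul_of_nonneg_left h1 (by nlinarith)
  nlinarith

theorem muF_sub (n x : ℝ) (hn : 13 ≤ n) :
    muF n x - x = (n + 2) * (n - x - n * x ^ 2 / 4) / (n - 1) ^ 2 := by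
  have : n - 1 ≠ 0 := by linarith
  unfold muF
  field_simp
  ring

theorem muF_sub_pos (n x : ℝ) (hn : 13 ≤ n) (h1 : -(1 / 2) ≤ x) (h2 : x ≤ 1 / 4) :
    0 < muF n x - x := by
  rw [muF_sub n x hn]
  have hx : x ^ 2 ≤ 1 / 4 := by nlinarith
  apply div_pos _ (by nlinarith)
  apply mul_pos (by linarith)
  have : n * x ^ 2 ≤ n * (1 / 4) := mul_le_mul_of_nonneg_left hx (by linarith)
  linarith

theorem muF_inv (h x : ℝ) (h0 : 0 < h) (h1 : h ≤ 1 / 13) :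
    muF (1 / h) x =
      ((1 + 2 * h) + (1 - 3 * h - h ^ 2) * x - (1 + 2 * h) / 4 * x ^ 2) / (1 - h) ^ 2 := by
  have e : (1 - h) ≠ 0 := by linarith
  have e2 : (1 / h - 1) = (1 - h) / h := by field_simp
  unfold muF
  rw [e2]
  field_simp

theorem muF_mono (h h' x : ℝ) (h0 : 0 < h) (hh : h ≤ h') (h1 : h' ≤ 1 / 13)
    (hx1 : -(1 / 2) ≤ x) (hx2 : x ≤ 1 / 4) : muF (1 / h) x ≤ muF (1 / h') x := by
  rw [muF_inv h x h0 (by linarith), muF_inv h' x (by linarith) h1]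
  have hx : x ^ 2 ≤ 1 / 4 := by nlinarith
  have key : ((1 + 2 * h) + (1 - 3 * h - h ^ 2) * x - (1 + 2 * h) / 4 * x ^ 2) ≤
      ((1 + 2 * h') + (1 - 3 * h' - h' ^ 2) * x - (1 + 2 * h') / 4 * x ^ 2) := by
    have : 0 ≤ (h' - h) * (2 - (3 + h + h') * x - x ^ 2 / 2) := by
      apply mul_nonneg (by linarith)
      have : (3 + h + h') * x ≤ (3 + h + h') * (1 / 4) :=
        mul_le_mul_of_nonneg_left hx2 (by linarith)
      linarith
    linarith
  have pos : 0 ≤ ((1 + 2 * h') + (1 - 3 * h' - h' ^ 2) * x - (1 + 2 * h') / 4 * x ^ 2) := by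
    have e1 : (1 - 3 * h' - h' ^ 2) * (-(1 / 2)) ≤ (1 - 3 * h' - h' ^ 2) * x :=
      mul_le_mul_of_nonneg_left hx1 (by nlinarith)
    have e2 : (1 + 2 * h') / 4 * x ^ 2 ≤ (1 + 2 * h') / 4 * (1 / 4) :=
      mul_le_mul_of_nonneg_left hx (by linarith)
    nlinarith
  apply div_le_div₀ pos key
  · have : 0 < 1 - h' := by linarith
    positivity
  · apply pow_le_pow_left₀ <;> linarith

theorem D_form (n d N1 N2 T M : ℝ) (hn : 1 < n) (h1 : 0 < N1) (h2 : 0 < N2)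
    (h : 0 < 4 * d * M ^ 2 + (n - 1) ^ 4 * (N2 ^ 3 * T * (N1 + 4 * d) + N2 ^ 2 * T ^ 2 * N1)) :
    0 < ((N1 + 4 * d) / N1 - 1) * (M / ((n - 1) ^ 2 * N2 ^ 2)) ^ 2
      + T / N2 * ((N1 + 4 * d) / N1) + (T / N2) ^ 2 := by
  have hn' : 0 < n - 1 := by linarith
  generalize n - 1 = c at *
  have e : ((N1 + 4 * d) / N1 - 1) * (M / (c ^ 2 * N2 ^ 2)) ^ 2
      + T / N2 * ((N1 + 4 * d) / N1) + (T / N2) ^ 2 =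
      (4 * d * M ^ 2 + c ^ 4 * (N2 ^ 3 * T * (N1 + 4 * d) + N2 ^ 2 * T ^ 2 * N1)) /
        (c ^ 4 * N2 ^ 4 * N1) := by
    field_simp
    ring
  rw [e]
  positivity

theorem E_form (c d N1 N2 T M : ℝ) (hn : 0 < c) (h1 : 0 < N1) (h2 : 0 < N2) :
    (M / (c ^ 2 * N2 ^ 2) - T / N2) *
      (((N1 + 4 * d) / N1 - 1) * (M / (c ^ 2 * N2 ^ 2)) + (N1 + 4 * d) / N1 + T / N2) =
    ((M - T * N2 * c ^ 2) * (4 * d * M + c ^ 2 * ((N1 + 4 * d) * N2 ^ 2 + T * N2 * N1))) /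
      (c ^ 4 * N2 ^ 4 * N1) := by
  field_simp
  ring

theorem muF_form (n N T : ℝ) (hn : 1 < n) (h2 : 0 < N) :
    muF n (T / N) = (n * (n + 2) * N ^ 2 + (n ^ 2 - 3 * n - 1) * T * N
      - n * (n + 2) / 4 * T ^ 2) / ((n - 1) ^ 2 * N ^ 2) := by
  have hn' : n - 1 ≠ 0 := by linarith
  unfold muF
  field_simp

theorem face (n b y a p q r s : ℝ) (hn : 13 ≤ n) (hb : 0 ≤ b) (hy : 0 < y) (ha : a = b + y)
    (hc : n ^ 2 * (2 * b + y) = 2 * n - 4)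
    (ha1 : 0 < 1 - 2 * a)
    (hp : p = (1 + 2 * a) / (1 - 2 * a)) (hq : q = (1 + 2 * b) / (1 - 2 * b))
    (hr : r = -3 * y / (1 - 2 * b)) (hs : s = y / (1 - 2 * a)) :
    0 < (p - 1) * muF n r ^ 2 + r * p + r ^ 2 ∧
    muF n r * muF n s * p ^ 2 * q ^ 2 <
      ((muF n r - r) * ((p - 1) * muF n r + p + r)) *
      ((muF n s - s) * ((q - 1) * muF n s + q + s)) := by
  have hb1 : 0 < 1 - 2 * b := by linarith
  obtain ⟨B, hB⟩ : ∃ B, B = 2 * b / y := ⟨_, rfl⟩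
  have hBy : B * y = 2 * b := by rw [hB]; field_simp
  have hB0 : 0 ≤ B := by rw [hB]; positivity
  obtain ⟨nz, hnz⟩ : ∃ nz, nz = n ^ 2 * (B + 1) := ⟨_, rfl⟩
  have hnz0 : 0 < nz := by rw [hnz]; positivity
  have ht : y * nz = 2 * (n - 2) := by
    rw [hnz]; linear_combination hc + n ^ 2 * hBy
  have hd2 : b * nz = (n - 2) * B := by
    linear_combination (-nz / 2) * hBy + B / 2 * ht
  have hd1 : a * nz = b * nz + y * nz := by rw [ha]; ring
  have hN1 : 0 < nz - 2 * (a * nz) := by nlinarith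
  have hN2 : 0 < nz - 2 * (b * nz) := by nlinarith
  have hp' : p = ((nz - 2 * (a * nz)) + 4 * (a * nz)) / (nz - 2 * (a * nz)) := by
    rw [hp, div_eq_div_iff ha1.ne' hN1.ne']; ring
  have hq' : q = ((nz - 2 * (b * nz)) + 4 * (b * nz)) / (nz - 2 * (b * nz)) := by
    rw [hq, div_eq_div_iff hb1.ne' hN2.ne']; ring
  have hr' : r = (-3 * (y * nz)) / (nz - 2 * (b * nz)) := by
    rw [hr, div_eq_div_iff hb1.ne' hN2.ne']; ring
  have hs' : s = (y * nz) / (nz - 2 * (a * nz)) := by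
    rw [hs, div_eq_div_iff ha1.ne' hN1.ne']; ring
  clear hp hq hr hs
  generalize y * nz = t at *
  generalize b * nz = d2 at *
  generalize a * nz = d1 at *
  have h1n : 1 < n := by linarith
  have hD := core_poly_D (n - 13) B (by linarith) hB0 n d1 d2 t nz _ _ _ _ (by ring) hd2 ht hd1 hnz
    rfl rfl rfl rfl
  have hW := core_poly_W (n - 13) B (by linarith) hB0 n d1 d2 t nz _ _ _ _ _ _ _ _ (by ring)
    hd2 ht hd1 hnz rfl rfl rfl rfl rfl rfl rfl rfl
  have hQ1 : nz + 2 * d1 = (nz - 2 * d1) + 4 * d1 := by ring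
  have hQ2 : nz + 2 * d2 = (nz - 2 * d2) + 4 * d2 := by ring
  rw [hQ1] at hD hW
  rw [hQ2] at hW
  have hmr := muF_form n (nz - 2 * d2) (-3 * t) h1n hN2
  have hms := muF_form n (nz - 2 * d1) t h1n hN1
  rw [← hr'] at hmr
  rw [← hs'] at hms
  generalize n * (n + 2) * (nz - 2 * d2) ^ 2 + (n ^ 2 - 3 * n - 1) * (-3 * t) * (nz - 2 * d2)
      - n * (n + 2) / 4 * (-3 * t) ^ 2 = Mr at *
  generalize n * (n + 2) * (nz - 2 * d1) ^ 2 + (n ^ 2 - 3 * n - 1) * t * (nz - 2 * d1)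
      - n * (n + 2) / 4 * t ^ 2 = Ms at *
  generalize nz - 2 * d2 = N2 at *
  generalize nz - 2 * d1 = N1 at *
  constructor
  · rw [hmr, hr', hp']
    exact D_form n d1 N1 N2 (-3 * t) Mr h1n hN1 hN2 hD
  · rw [hmr, hms, hr', hp', hq', hs']
    have hc0 : 0 < n - 1 := by linarith
    rw [E_form (n - 1) d1 N1 N2 (-3 * t) Mr hc0 hN1 hN2, E_form (n - 1) d2 N2 N1 t Ms hc0 hN2 hN1]
    generalize (Mr - -3 * t * N2 * (n - 1) ^ 2) *
      (4 * d1 * Mr + (n - 1) ^ 2 * ((N1 + 4 * d1) * N2 ^ 2 + -3 * t * N2 * N1)) = E1 at *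
    generalize (Ms - t * N1 * (n - 1) ^ 2) *
      (4 * d2 * Ms + (n - 1) ^ 2 * ((N2 + 4 * d2) * N1 ^ 2 + t * N1 * N2)) = E2 at *
    generalize n - 1 = c at *
    rw [← sub_pos]
    have e : E1 / (c ^ 4 * N2 ^ 4 * N1) * (E2 / (c ^ 4 * N1 ^ 4 * N2)) -
        Mr / (c ^ 2 * N2 ^ 2) * (Ms / (c ^ 2 * N1 ^ 2)) * ((N1 + 4 * d1) / N1) ^ 2 *
          ((N2 + 4 * d2) / N2) ^ 2 =
        (E1 * E2 - Mr * Ms * (N1 + 4 * d1) ^ 2 * (N2 + 4 * d2) ^ 2 * c ^ 4 * N1 * N2) /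
          (c ^ 8 * N1 ^ 5 * N2 ^ 5) := by
      field_simp
    rw [e]
    positivity

theorem E_mono (p x u v : ℝ) (hp : 1 ≤ p) (hu : 0 < u) (huv : u ≤ v)
    (hD : 0 < (p - 1) * u ^ 2 + x * p + x ^ 2) :
    ((u - x) * ((p - 1) * u + p + x)) * v ≤ ((v - x) * ((p - 1) * v + p + x)) * u := by
  have h1 : (p - 1) * u * u ≤ (p - 1) * u * v :=
    mul_le_mul_of_nonneg_left huv (mul_nonneg (by linarith) hu.le)
  have h2 : 0 ≤ (v - u) * ((p - 1) * u * v + x * (p + x)) :=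
    mul_nonneg (by linarith) (by nlinarith)
  nlinarith

theorem D_mono (p x u v : ℝ) (hp : 1 ≤ p) (hu : 0 < u) (huv : u ≤ v)
    (hD : 0 < (p - 1) * u ^ 2 + x * p + x ^ 2) :
    0 < (p - 1) * v ^ 2 + x * p + x ^ 2 := by
  have : (p - 1) * u ^ 2 ≤ (p - 1) * v ^ 2 :=
    mul_le_mul_of_nonneg_left (pow_le_pow_left₀ hu.le huv 2) (by linarith)
  linarith

theorem general (n b y a p q r s : ℝ) (hn : 13 ≤ n) (hb : 0 ≤ b) (hy : 0 < y) (ha : a = b + y)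
    (hc : n ^ 2 * (2 * b + y) ≤ 2 * n - 4)
    (ha1 : 0 < 1 - 2 * a)
    (hp : p = (1 + 2 * a) / (1 - 2 * a)) (hq : q = (1 + 2 * b) / (1 - 2 * b))
    (hr : r = -3 * y / (1 - 2 * b)) (hs : s = y / (1 - 2 * a))
    (hp1 : 1 ≤ p) (hq1 : 1 ≤ q) (hr1 : -(1 / 2) ≤ r) (hr2 : r ≤ 0) (hs1 : 0 < s)
    (hs2 : s ≤ 1 / 4) :
    0 < (p - 1) * muF n r ^ 2 + r * p + r ^ 2 ∧
    muF n r * muF n s * p ^ 2 * q ^ 2 <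
      ((muF n r - r) * ((p - 1) * muF n r + p + r)) *
      ((muF n s - s) * ((q - 1) * muF n s + q + s)) := by
  obtain ⟨h, hh⟩ : ∃ h, h = 1 / n := ⟨_, rfl⟩
  have hnh : n = 1 / h := by rw [hh]; simp
  have hh0 : 0 < h := by rw [hh]; positivity
  have hh1 : h ≤ 1 / 13 := by rw [hh]; exact one_div_le_one_div_of_le (by norm_num) hn
  have hc' : 2 * b + y ≤ 2 * h - 4 * h ^ 2 := by
    have : 2 * h - 4 * h ^ 2 = (2 * n - 4) / n ^ 2 := by rw [hh]; field_simp
    rw [this, le_div_iff₀ (by positivity)]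
    linarith
  set c := 2 * b + y with hcdef
  have hc0 : 0 < c := by positivity
  have hsq : 0 ≤ 1 - 4 * c := by nlinarith [sq_nonneg (1 - 4 * h)]
  have hs0 := Real.sq_sqrt hsq
  have hs00 := Real.sqrt_nonneg (1 - 4 * c)
  set w := √(1 - 4 * c)
  have hw1 : w < 1 := by nlinarith
  have hw2 : 1 - 4 * h ≤ w := by
    apply le_of_sq_le_sq _ hs00 |> fun h => h
    nlinarith
  obtain ⟨g, hg⟩ : ∃ g, g = (1 - w) / 4 := ⟨_, rfl⟩
  have hg0 : 0 < g := by rw [hg]; linarith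
  have hgh : g ≤ h := by rw [hg]; linarith
  have hgc : c = 2 * g - 4 * g ^ 2 := by rw [hg]; linear_combination hs0 / 4
  have hn0 : 13 ≤ 1 / g := by rw [le_div_iff₀ hg0]; linarith
  have hc0' : (1 / g) ^ 2 * (2 * b + y) = 2 * (1 / g) - 4 := by
    rw [← hcdef, hgc]; field_simp
  obtain ⟨fD, fE⟩ := face (1 / g) b y a p q r s hn0 hb hy ha hc0' ha1 hp hq hr hs
  have m1 : muF (1 / g) r ≤ muF n r := by
    rw [hnh]; exact muF_mono g h r hg0 hgh hh1 hr1 (by linarith)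
  have m2 : muF (1 / g) s ≤ muF n s := by
    rw [hnh]; exact muF_mono g h s hg0 hgh hh1 (by linarith) hs2
  have u1 := muF_pos (1 / g) r hn0 hr1 (by linarith)
  have u2 := muF_pos (1 / g) s hn0 (by linarith) hs2
  have v1 := muF_sub_pos (1 / g) r hn0 hr1 (by linarith)
  have v2 := muF_sub_pos (1 / g) s hn0 (by linarith) hs2
  have w1 := muF_sub_pos n r hn hr1 (by linarith)
  have w2 := muF_sub_pos n s hn (by linarith) hs2
  generalize muF (1 / g) r = x1 at *
  generalize muF (1 / g) s = x2 at *
  generalize muF n r = z1 at *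
  generalize muF n s = z2 at *
  have fD2 : 0 < (q - 1) * x2 ^ 2 + s * q + s ^ 2 := by
    have : 0 ≤ (q - 1) * x2 ^ 2 := mul_nonneg (by linarith) (by positivity)
    have : 0 < s * q := mul_pos hs1 (by linarith)
    positivity
  refine ⟨D_mono p r x1 z1 hp1 u1 m1 fD, ?_⟩
  have k1 := E_mono p r x1 z1 hp1 u1 m1 fD
  have k2 := E_mono q s x2 z2 hq1 u2 m2 fD2
  have z1p : 0 < z1 := by linarith
  have z2p : 0 < z2 := by linarith
  have P1 : 0 < (p - 1) * x1 + p + r := by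
    have : 0 ≤ (p - 1) * x1 := mul_nonneg (by linarith) (by positivity)
    linarith
  have P2 : 0 < (q - 1) * x2 + q + s := by
    have : 0 ≤ (q - 1) * x2 := mul_nonneg (by linarith) (by positivity)
    linarith
  have P3 : 0 < (p - 1) * z1 + p + r := by
    have : 0 ≤ (p - 1) * z1 := mul_nonneg (by linarith) (by positivity)
    linarith
  have F1 := mul_pos v1 P1
  have F2 := mul_pos v2 P2
  have F3 := mul_pos w1 P3
  generalize (x1 - r) * ((p - 1) * x1 + p + r) = e1 at *
  generalize (x2 - s) * ((q - 1) * x2 + q + s) = e2 at *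
  generalize (z1 - r) * ((p - 1) * z1 + p + r) = f1 at *
  generalize (z2 - s) * ((q - 1) * z2 + q + s) = f2 at *
  have A : (e1 * z1) * (e2 * z2) ≤ (f1 * x1) * (f2 * x2) :=
    mul_le_mul k1 k2 (by positivity) (by positivity)
  have A2 : x1 * x2 * p ^ 2 * q ^ 2 * (z1 * z2) < e1 * e2 * (z1 * z2) :=
    mul_lt_mul_of_pos_right fE (by positivity)
  have A3 : (z1 * z2 * p ^ 2 * q ^ 2) * (x1 * x2) < (f1 * f2) * (x1 * x2) := by linarith
  exact lt_of_mul_lt_mul_right A3 (by positivity)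

theorem alpha_pos (n x k α : ℝ) (hn : 13 ≤ n) (hx : x ≠ 0)
    (hx2 : n ^ 2 * x ^ 2 ≤ 36) (hx3 : n * x ≤ 4)
    (hk : k = n / (2 * (n - 1)) * (x - 2 + x / n + x ^ 2 / 2))
    (hα : α = -((n - 1) / n) * k ^ 2 + k * (x - 1) - x * (x - 1) / 2) : 0 < α := by
  have h1 : 0 < n - 1 := by linarith
  have e : α = x ^ 2 * (8 * n - 4 - 4 * (n * x) - n ^ 2 * x ^ 2) / (16 * n * (n - 1)) := by
    rw [hα, hk]; field_simp; ring
  rw [e]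
  have : 0 < 8 * n - 4 - 4 * (n * x) - n ^ 2 * x ^ 2 := by linarith
  positivity

theorem A_form (n x k : ℝ) (hn : 13 ≤ n)
    (hk : k = n / (2 * (n - 1)) * (x - 2 + x / n + x ^ 2 / 2)) :
    (3 / 2) * x - (n + 2) / n * k = (n - 1) / n * muF n x := by
  have h1 : 0 < n - 1 := by linarith
  rw [hk]; unfold muF; field_simp; ring

theorem beta_form (c p x μ θ δ A β γ : ℝ) (hp : 0 < p)
    (hD : 0 < (p - 1) * μ ^ 2 + x * p + x ^ 2) (hA : A = c * μ)
    (hθ : θ = (μ - x) / p)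
    (hδ : δ = (x + θ * p) * (x + θ * (p - 2) + 1) + θ * (θ - 1) * p)
    (hβ : β = A * (2 * θ * (p - 1) + x + 1) / δ - c)
    (hγ : γ = A * p / δ) :
    β = c * ((μ - x) * ((p - 1) * μ + p + x)) / ((p - 1) * μ ^ 2 + x * p + x ^ 2) ∧
    γ = c * (μ * p ^ 2) / ((p - 1) * μ ^ 2 + x * p + x ^ 2) := by
  have hδ' : δ = ((p - 1) * μ ^ 2 + x * p + x ^ 2) / p := by
    rw [hδ, hθ]; field_simp; ring
  obtain ⟨D, hDD⟩ : ∃ D, D = (p - 1) * μ ^ 2 + x * p + x ^ 2 := ⟨_, rfl⟩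
  rw [← hDD] at hD hδ' ⊢
  constructor
  · have : β = c * (μ * (2 * (μ - x) * (p - 1) + (x + 1) * p) - D) / D := by
      rw [hβ, hδ', hA, hθ]; field_simp; ring
    rw [this, hDD]; congr 2; ring
  · rw [hγ, hδ', hA]; field_simp

set_option maxHeartbeats 2000000 in
theorem positivity_condition_c0_four (n : ℕ) (hn : 13 ≤ n) :
    ∀ d₁ d₂ : ℝ, 0 ≤ d₂ → d₂ < d₁ → d₁ ≤ 2 - d₂ - 4 / (n : ℝ) →
    ∀ p q r s k₁ k₂ μr μs θ₁ θ₂ δ₁ δ₂ α₁ α₂ β₁ β₂ γ₁ γ₂ : ℝ,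
      1 / (p + 1) = 1 / 2 - d₁ / (n : ℝ) →
      1 / (q + 1) = 1 / 2 - d₂ / (n : ℝ) →
      r = -3 * (d₁ - d₂) / ((n : ℝ) - 2 * d₂) →
      s = (d₁ - d₂) / ((n : ℝ) - 2 * d₁) →
      k₁ = (n : ℝ) / (2 * ((n : ℝ) - 1)) * (r - 2 + r / (n : ℝ) + r ^ 2 / 2) →
      k₂ = (n : ℝ) / (2 * ((n : ℝ) - 1)) * (s - 2 + s / (n : ℝ) + s ^ 2 / 2) →
      μr = (((n : ℝ) + 2) * (n : ℝ) + ((n : ℝ) ^ 2 - 3 * (n : ℝ) - 1) * r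
          - ((n : ℝ) * ((n : ℝ) + 2) / 4) * r ^ 2) / ((n : ℝ) - 1) ^ 2 →
      μs = (((n : ℝ) + 2) * (n : ℝ) + ((n : ℝ) ^ 2 - 3 * (n : ℝ) - 1) * s
          - ((n : ℝ) * ((n : ℝ) + 2) / 4) * s ^ 2) / ((n : ℝ) - 1) ^ 2 →
      θ₁ = (μr - r) / p →
      θ₂ = (μs - s) / q →
      δ₁ = (r + θ₁ * p) * (r + θ₁ * (p - 2) + 1) + θ₁ * (θ₁ - 1) * p →
      δ₂ = (s + θ₂ * q) * (s + θ₂ * (q - 2) + 1) + θ₂ * (θ₂ - 1) * q →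
      α₁ = -(((n : ℝ) - 1) / n) * k₁ ^ 2 + k₁ * (r - 1) - r * (r - 1) / 2 →
      α₂ = -(((n : ℝ) - 1) / n) * k₂ ^ 2 + k₂ * (s - 1) - s * (s - 1) / 2 →
      β₁ = ((3 / 2) * r - ((n : ℝ) + 2) / n * k₁) *
          (2 * θ₁ * (p - 1) + r + 1) / δ₁ - ((n : ℝ) - 1) / n →
      β₂ = ((3 / 2) * s - ((n : ℝ) + 2) / n * k₂) *
          (2 * θ₂ * (q - 1) + s + 1) / δ₂ - ((n : ℝ) - 1) / n →
      γ₁ = ((3 / 2) * r - ((n : ℝ) + 2) / n * k₁) * p / δ₁ →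
      γ₂ = ((3 / 2) * s - ((n : ℝ) + 2) / n * k₂) * q / δ₂ →
      0 < α₁ ∧ 0 < α₂ ∧ 0 < β₁ ∧ 0 < β₂ ∧ 0 < γ₁ ∧ 0 < γ₂ ∧
        0 < β₁ * β₂ - γ₁ * γ₂ := by
  intro d₁ d₂ hd2 hd hdc p q r s k₁ k₂ μr μs θ₁ θ₂ δ₁ δ₂ α₁ α₂ β₁ β₂ γ₁ γ₂ hp hq hr hs hk₁ hk₂
    hμr hμs hθ₁ hθ₂ hδ₁ hδ₂ hα₁ hα₂ hβ₁ hβ₂ hγ₁ hγ₂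
  have hN : (13 : ℝ) ≤ (n : ℝ) := by exact_mod_cast hn
  generalize (n : ℝ) = N at *
  have hN0 : 0 < N := by linarith
  have hdc' : N * (d₁ + d₂) ≤ 2 * N - 4 := by
    have := mul_le_mul_of_nonneg_left hdc hN0.le
    have e : N * (2 - d₂ - 4 / N) = 2 * N - N * d₂ - 4 := by field_simp
    linarith
  have hd12 : d₁ + d₂ < 2 := by
    have : 0 < 4 / N := by positivity
    linarith
  obtain ⟨a, ha⟩ : ∃ a, a = d₁ / N := ⟨_, rfl⟩
  obtain ⟨b, hb⟩ : ∃ b, b = d₂ / N := ⟨_, rfl⟩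
  have haN : d₁ = a * N := by rw [ha]; field_simp
  have hbN : d₂ = b * N := by rw [hb]; field_simp
  have hb0 : 0 ≤ b := by rw [hb]; positivity
  have hab : b < a := by rw [ha, hb]; gcongr
  have hsum : a + b ≤ 2 / 13 := by
    have : a + b = (d₁ + d₂) / N := by rw [ha, hb]; ring
    rw [this, div_le_div_iff₀ hN0 (by norm_num)]; linarith
  have ha1 : 0 < 1 - 2 * a := by linarith
  have hb1 : 0 < 1 - 2 * b := by linarith
  have inv (x P : ℝ) (hx : 0 < 1 - 2 * x) (h : 1 / (P + 1) = 1 / 2 - x) :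
      P = (1 + 2 * x) / (1 - 2 * x) := by
    have h3 : P + 1 ≠ 0 := by
      intro h0
      rw [h0] at h
      norm_num at h
      linarith
    rw [div_eq_iff h3] at h
    rw [eq_div_iff hx.ne']
    linarith
  have hp' := inv a p ha1 (by rw [hp, ha])
  have hq' := inv b q hb1 (by rw [hq, hb])
  have hr' : r = -3 * (a - b) / (1 - 2 * b) := by
    have : N - 2 * d₂ ≠ 0 := by
      rw [hbN]
      have : 0 < N * (1 - 2 * b) := mul_pos hN0 hb1
      intro h; linarith
    rw [hr, div_eq_div_iff this hb1.ne', haN, hbN]; ring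
  have hs' : s = (a - b) / (1 - 2 * a) := by
    have : N - 2 * d₁ ≠ 0 := by
      rw [haN]
      have : 0 < N * (1 - 2 * a) := mul_pos hN0 ha1
      intro h; linarith
    rw [hs, div_eq_div_iff this ha1.ne', haN, hbN]; ring
  have hp1 : 1 ≤ p := by rw [hp', le_div_iff₀ ha1]; linarith
  have hq1 : 1 ≤ q := by rw [hq', le_div_iff₀ hb1]; linarith
  have hr1 : -(1 / 2) ≤ r := by rw [hr', le_div_iff₀ hb1]; linarith
  have hr2 : r < 0 := by
    rw [hr']; exact div_neg_of_neg_of_pos (by linarith) hb1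
  have hs1 : 0 < s := by rw [hs']; exact div_pos (by linarith) ha1
  have hs2 : s ≤ 1 / 4 := by rw [hs', div_le_iff₀ ha1]; linarith
  have hab2 : N * a + N * b ≤ 2 := by rw [haN, hbN] at hd12; linarith
  have hNb : 13 * b ≤ N * b := mul_le_mul_of_nonneg_right hN hb0
  have hr6 : -6 ≤ N * r := by
    rw [hr', mul_div_assoc', le_div_iff₀ hb1]
    linarith
  have hs4 : N * s ≤ 4 := by
    rw [hs', mul_div_assoc', div_le_iff₀ ha1]
    linarith
  have hNs : 0 < N * s := by positivity
  have hNr : N * r < 0 := mul_neg_of_pos_of_neg hN0 hr2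
  have sq1 : N ^ 2 * r ^ 2 ≤ 36 := by
    have e : N ^ 2 * r ^ 2 = (N * r) * (N * r) := by ring
    rw [e]; generalize N * r = z at *; nlinarith only [hr6, hNr]
  have sq2 : N ^ 2 * s ^ 2 ≤ 36 := by
    have e : N ^ 2 * s ^ 2 = (N * s) * (N * s) := by ring
    rw [e]; generalize N * s = z at *; nlinarith only [hs4, hNs]
  have A1 := alpha_pos N r k₁ α₁ hN hr2.ne sq1 (by linarith) hk₁ hα₁
  have A2 := alpha_pos N s k₂ α₂ hN hs1.ne' sq2 (by linarith) hk₂ hα₂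
  have hμr' : μr = muF N r := hμr
  have hμs' : μs = muF N s := hμs
  obtain ⟨D1, main⟩ := general N b (a - b) a p q r s hN hb0 (by linarith) (by ring)
    (by rw [haN, hbN] at hdc'; linarith) ha1 hp' hq' hr' hs' hp1 hq1 hr1 hr2.le hs1 hs2
  have u1 := muF_pos N r hN hr1 (by linarith)
  have u2 := muF_pos N s hN (by linarith) hs2
  have v1 := muF_sub_pos N r hN hr1 (by linarith)
  have v2 := muF_sub_pos N s hN (by linarith) hs2
  have f1 := A_form N r k₁ hN hk₁
  have f2 := A_form N s k₂ hN hk₂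
  rw [← hμr'] at D1 main u1 v1 f1
  rw [← hμs'] at main u2 v2 f2
  have D2 : 0 < (q - 1) * μs ^ 2 + s * q + s ^ 2 := by
    have : 0 ≤ (q - 1) * μs ^ 2 := mul_nonneg (by linarith) (by positivity)
    have : 0 < s * q := mul_pos hs1 (by linarith)
    positivity
  obtain ⟨b1, g1⟩ := beta_form ((N - 1) / N) p r μr θ₁ δ₁ _ β₁ γ₁ (by linarith) D1 f1 hθ₁ hδ₁ hβ₁ hγ₁
  obtain ⟨b2, g2⟩ := beta_form ((N - 1) / N) q s μs θ₂ δ₂ _ β₂ γ₂ (by linarith) D2 f2 hθ₂ hδ₂ hβ₂ hγ₂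
  have P1 : 0 < (p - 1) * μr + p + r := by
    have : 0 ≤ (p - 1) * μr := mul_nonneg (by linarith) (by positivity)
    linarith
  have P2 : 0 < (q - 1) * μs + q + s := by
    have : 0 ≤ (q - 1) * μs := mul_nonneg (by linarith) (by positivity)
    linarith
  have F1 := mul_pos v1 P1
  have F2 := mul_pos v2 P2
  have hc : 0 < (N - 1) / N := div_pos (by linarith) hN0
  have hp0 : 0 < p := by linarith
  have hq0 : 0 < q := by linarith
  refine ⟨A1, A2, ?_, ?_, ?_, ?_, ?_⟩
  · rw [b1]; exact div_pos (mul_pos hc F1) D1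
  · rw [b2]; exact div_pos (mul_pos hc F2) D2
  · rw [g1]; exact div_pos (by positivity) D1
  · rw [g2]; exact div_pos (by positivity) D2
  · rw [b1, b2, g1, g2, div_mul_div_comm, div_mul_div_comm, ← sub_div]
    apply div_pos _ (mul_pos D1 D2)
    have : 0 < ((N - 1) / N) ^ 2 * (((μr - r) * ((p - 1) * μr + p + r)) *
      ((μs - s) * ((q - 1) * μs + q + s)) - μr * μs * p ^ 2 * q ^ 2) :=
      mul_pos (by positivity) (by linarith)
    linarith
end

section
/- For every integer n with 5 ≤ n ≤ 12 and all real d₁, d₂ with 0 ≤ d₂ < d₁ < 2 − d₂ − 4/n, there exists ε₀ > 0 such that the following holds. Define p, q by 1/(p+1) = 1/2 − d₁/n and 1/(q+1) = 1/2 − d₂/n; choose r = −3(d₁−d₂)/(n−2d₂), s = (d₁−d₂)/(n−2d₁), k₁ = (n/(2(n−1)))(r − 1 − √((1−r)((n−2)r+n)/n)) + ε₀, k₂ = (n/(2(n−1)))(s − 1 − √((1−s)((n−2)s+n)/n)) + ε₀, ρ₁ = (n/(n−1))((3/2)r − ((n+2)/n)k₁), ρ₂ = (n/(n−1))((3/2)s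 − ((n+2)/n)k₂), θ₁ = (ρ₁ − r)/p, θ₂ = (ρ₂ − s)/q; and define δ₁ = (r + θ₁p)(r + θ₁(p−2) + 1) + θ₁(θ₁−1)p, δ₂ = (s + θ₂q)(s + θ₂(q−2) + 1) + θ₂(θ₂−1)q, α₁ = −((n−1)/n)k₁² + k₁(r−1) − r(r−1)/2, α₂ = −((n−1)/n)k₂² + k₂(s−1) − s(s−1)/2, β₁ = ((3/2)r − ((n+2)/n)k₁)(2θ₁(p−1) + r + 1)/δ₁ − (n−1)/n, β₂ = ((3/2)s − ((n+2)/n)k₂)(2θ₂(q−1) + s + 1)/δ₂ − (n−1)/n, γ₁ = ((3/2)r − ((n+2)/n)k₁)·p/δ₁, γ₂ = ((3/2)s − ((n+2)/n)k₂)·q/δ₂. Then α₁ > 0, α₂ > 0, β₁ > 0, β₂ > 0, γ₁ > 0, γ₂ > 0 and β₁β₂ − γ₁γ₂ > 0. -/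
open MeasureTheory Real
open scoped InnerProductSpace

/-- Concavity of `log (c / (1 - c))` on `(0, 1/2]`. -/
lemma logit_concave : ConcaveOn ℝ (Set.Ioc (0 : ℝ) (1 / 2))
    (fun c => Real.log c - Real.log (1 - c)) := by
  have hd : ∀ c ∈ Set.Ioo (0 : ℝ) (1 / 2),
      HasDerivAt (fun c => Real.log c - Real.log (1 - c)) (1 / (c * (1 - c))) c := by
    intro c hc
    have h0 : c ≠ 0 := hc.1.ne'
    have h1 : 1 - c ≠ 0 := by linarith [hc.2, hc.1]
    have := (Real.hasDerivAt_log h0).sub (((hasDerivAt_id c).const_sub 1).log h1)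
    refine this.congr_deriv ?_
    rw [id_eq]
    field_simp
    ring
  have hinterior : interior (Set.Ioc (0 : ℝ) (1 / 2)) = Set.Ioo 0 (1 / 2) := interior_Ioc
  apply AntitoneOn.concaveOn_of_deriv (convex_Ioc _ _)
  · apply ContinuousOn.sub
    · exact Real.continuousOn_log.mono (fun c hc => by simpa using hc.1.ne')
    · apply ContinuousOn.log (by fun_prop)
      intro c hc
      linarith [hc.1, hc.2]
  · rw [hinterior]
    intro c hc
    exact (hd c hc).differentiableAt.differentiableWithinAt
  · rw [hinterior]
    intro c hc e he hce
    rw [(hd c hc).deriv, (hd e he).deriv]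
    apply one_div_le_one_div_of_le
    · nlinarith [hc.1, hc.2]
    · nlinarith [hc.1, hc.2, he.1, he.2]

/-- The quadratic expression `u (ρ + 1 - u (ρ - r))` with `u = c / (1 - c)`. -/
noncomputable def fu (ρ r c : ℝ) : ℝ := c / (1 - c) * (ρ + 1 - c / (1 - c) * (ρ - r))

lemma fu_aux_pos {ρ r c : ℝ} (hr : -1 < r) (hρ : r ≤ ρ) (h0 : 0 < c) (h1 : c ≤ 1 / 2) :
    0 < c / (1 - c) ∧ 0 < ρ + 1 - c / (1 - c) * (ρ - r) := by
  have h2 : 0 < 1 - c := by linarith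
  have h3 : c / (1 - c) ≤ 1 := by rw [div_le_one h2]; linarith
  have h4 : 0 < c / (1 - c) := by positivity
  refine ⟨h4, ?_⟩
  nlinarith

lemma fu_log_concave {ρ r : ℝ} (hr : -1 < r) (hρ : r ≤ ρ) {c e w v : ℝ}
    (hc0 : 0 < c) (hc1 : c ≤ 1 / 2) (he0 : 0 < e) (he1 : e ≤ 1 / 2)
    (hw : 0 ≤ w) (hv : 0 ≤ v) (hwv : w + v = 1) :
    w * Real.log (fu ρ r c) + v * Real.log (fu ρ r e) ≤ Real.log (fu ρ r (w * c + v * e)) := by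
  have hm := (convex_Ioc (0 : ℝ) (1 / 2)) ⟨hc0, hc1⟩ ⟨he0, he1⟩ hw hv hwv
  simp only [smul_eq_mul] at hm
  have hl := logit_concave.2 ⟨hc0, hc1⟩ ⟨he0, he1⟩ hw hv hwv
  simp only [smul_eq_mul] at hl
  obtain ⟨c1, c2⟩ := fu_aux_pos hr hρ hc0 hc1
  obtain ⟨e1, e2⟩ := fu_aux_pos hr hρ he0 he1
  obtain ⟨m1, m2⟩ := fu_aux_pos hr hρ hm.1 hm.2
  have hl2 := strictConcaveOn_log_Ioi.concaveOn.2 (Set.mem_Ioi.2 c2) (Set.mem_Ioi.2 e2) hw hv hwv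
  simp only [smul_eq_mul] at hl2
  set m := w * c + v * e with hmdef
  have hmc : 0 < 1 - m := by linarith [hm.2]
  have hcc : 0 < 1 - c := by linarith
  have hec : 0 < 1 - e := by linarith
  have tang : ∀ z : ℝ, 0 < 1 - z → m / (1 - m) + (z - m) / (1 - m) ^ 2 ≤ z / (1 - z) := by
    intro z hz
    have : z / (1 - z) - (m / (1 - m) + (z - m) / (1 - m) ^ 2)
        = (z - m) ^ 2 / ((1 - z) * (1 - m) ^ 2) := by
      field_simp
      ring
    have h2 : 0 ≤ (z - m) ^ 2 / ((1 - z) * (1 - m) ^ 2) := by positivity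
    linarith
  have hu : m / (1 - m) ≤ w * (c / (1 - c)) + v * (e / (1 - e)) := by
    have t1 := mul_le_mul_of_nonneg_left (tang c hcc) hw
    have t2 := mul_le_mul_of_nonneg_left (tang e hec) hv
    have : w * (m / (1 - m) + (c - m) / (1 - m) ^ 2) + v * (m / (1 - m) + (e - m) / (1 - m) ^ 2)
        = m / (1 - m) := by
      have hv' : v = 1 - w := by linarith
      rw [hv'] at hmdef ⊢
      have : w * (m / (1 - m) + (c - m) / (1 - m) ^ 2)
        + (1 - w) * (m / (1 - m) + (e - m) / (1 - m) ^ 2)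
        = m / (1 - m) + (w * c + (1 - w) * e - m) / (1 - m) ^ 2 := by ring
      rw [this, ← hmdef]
      simp
    linarith
  have hlog : Real.log (w * (ρ + 1 - c / (1 - c) * (ρ - r)) + v * (ρ + 1 - e / (1 - e) * (ρ - r)))
      ≤ Real.log (ρ + 1 - m / (1 - m) * (ρ - r)) := by
    apply Real.log_le_log
    · rcases hw.eq_or_lt with h | h
      · have : v = 1 := by linarith
        rw [← h, this]; linarith
      · have := mul_pos h c2
        have := mul_nonneg hv e2.le
        linarith
    · have := mul_le_mul_of_nonneg_right hu (sub_nonneg.2 hρ)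
      have hv' : v = 1 - w := by linarith
      rw [hv'] at this ⊢
      nlinarith
  unfold fu
  rw [Real.log_mul c1.ne' c2.ne', Real.log_mul e1.ne' e2.ne', Real.log_mul m1.ne' m2.ne',
    Real.log_div hc0.ne' hcc.ne', Real.log_div he0.ne' hec.ne', Real.log_div hm.1.ne' hmc.ne']
  linarith

lemma interp {ρ r σ s t y y0 K : ℝ} (hr : -1 < r) (hρ : r ≤ ρ) (hs : -1 < s) (hσ : s ≤ σ)
    (ht : 0 < t) (ht1 : t ≤ 1) (hy0 : 0 < y0) (hy : y0 < y) (hy1 : y ≤ 1) (hK : 0 < K)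
    (h0 : K < fu ρ r (t * y0 / 2) * fu σ s (y0 / 2))
    (h1 : K < fu ρ r (t * 1 / 2) * fu σ s (1 / 2)) :
    K < fu ρ r (t * y / 2) * fu σ s (y / 2) := by
  rcases hy1.eq_or_lt with h | hlt
  · subst h; exact h1
  have hpos : ∀ z : ℝ, 0 < z → z ≤ 1 → 0 < fu ρ r (t * z / 2) ∧ 0 < fu σ s (z / 2) := by
    intro z hz hz1
    have a1 := fu_aux_pos hr hρ (c := t * z / 2) (by positivity) (by nlinarith)
    have a2 := fu_aux_pos hs hσ (c := z / 2) (by positivity) (by linarith)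
    exact ⟨mul_pos a1.1 a1.2, mul_pos a2.1 a2.2⟩
  obtain ⟨p0, q0⟩ := hpos y0 hy0 (by linarith)
  obtain ⟨p1, q1⟩ := hpos 1 one_pos le_rfl
  obtain ⟨p, q⟩ := hpos y (by linarith) hy1
  have hd : 0 < 1 - y0 := by linarith
  set w := (1 - y) / (1 - y0) with hw
  set v := (y - y0) / (1 - y0) with hv
  have hw0 : 0 < w := div_pos (by linarith) hd
  have hv0 : 0 < v := div_pos (by linarith) hd
  have hwv : w + v = 1 := by rw [hw, hv]; field_simp; ring
  have hyc : w * y0 + v * 1 = y := by rw [hw, hv]; field_simp; ring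
  have A := fu_log_concave hr hρ (c := t * y0 / 2) (e := t * 1 / 2) (by positivity)
    (by nlinarith) (by positivity) (by linarith) hw0.le hv0.le hwv
  have B := fu_log_concave hs hσ (c := y0 / 2) (e := 1 / 2) (by positivity)
    (by linarith) (by positivity) (by linarith) hw0.le hv0.le hwv
  have e1 : w * (t * y0 / 2) + v * (t * 1 / 2) = t * y / 2 := by rw [← hyc]; ring
  have e2 : w * (y0 / 2) + v * (1 / 2) = y / 2 := by rw [← hyc]; ring
  rw [e1] at A
  rw [e2] at B
  have l0 := Real.log_lt_log hK h0
  have l1 := Real.log_lt_log hK h1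
  rw [Real.log_mul p0.ne' q0.ne'] at l0
  rw [Real.log_mul p1.ne' q1.ne'] at l1
  rw [← Real.log_lt_log_iff hK (mul_pos p q), Real.log_mul p.ne' q.ne']
  have l0' := mul_lt_mul_of_pos_left l0 hw0
  have l1' := mul_lt_mul_of_pos_left l1 hv0
  have : Real.log K = w * Real.log K + v * Real.log K := by rw [← add_mul, hwv, one_mul]
  linarith

/-- Linear lower bound for `ρ₁`, in the variable `x = 1 - a / b`. -/
noncomputable def LA (N m x : ℝ) : ℝ :=
  N / (N - 1) * (-9 * x / 4 + (N + 2) / (2 * (N - 1)) * (2 + 3 * x / 2 - m * x))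

/-- Linear lower bound for `(1 - x) ρ₂`. -/
noncomputable def WB (N m x : ℝ) : ℝ :=
  N / (N - 1) * (3 * x / 4 + (N + 2) / (2 * (N - 1)) * (2 * (1 - x) - x / 2 - m * x / 2))

/-- The polynomial inequalities of one variable to which everything reduces. -/
def PolyIneq (x0 L W x : ℝ) : Prop :=
  0 < L ∧ x / 2 < W ∧ 3 / 2 * (1 + x) - 9 / 4 * x * (1 - x) < 2 * L ^ 2 ∧
  L * W * (1 + x) ^ 2 < (L + 3 / 2 * x) * (L * (2 * x) + -(3 / 2) * x * (1 - x) + 1 + x) *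
    (W - x / 2) * (1 - x / 2) ∧
  L * W * (2 * (2 - x) - (1 - x) * (2 - x0)) ^ 2 * (2 * (2 - x) - (2 - x0)) ^ 2 <
    (2 - x0) ^ 2 * (L + 3 / 2 * x) *
    (L * (2 * (2 - x) - 2 * ((1 - x) * (2 - x0))) + -(3 / 2) * x * (1 - x) * (2 - x0)
      + (2 * (2 - x) - (1 - x) * (2 - x0))) * (W - x / 2) *
    (W * (2 * (2 - x) - 2 * (2 - x0)) + x * (2 - x0) / 2
      + (1 - x) * (2 * (2 - x) - (2 - x0)))

/-- All numerical facts for a given dimension. -/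
def NumFacts (N x0 m1 m2 : ℝ) : Prop :=
  x0 * m1 < 1 ∧ x0 / (2 * (1 - x0)) * m2 < 1 ∧ 0 ≤ m1 ∧ 0 ≤ m2 ∧
  x0 * (m1 ^ 2 + 9 / 4 * (1 - 2 / N)) ≤ 2 * m1 + 3 / N ∧
  x0 / (2 * (1 - x0)) * (m2 ^ 2 + 1 - 2 / N) ≤ 2 * m2 - 2 / N ∧
  ∀ x, 0 < x → x ≤ x0 → PolyIneq x0 (LA N m1 x) (WB N m2 x) x

lemma bern_nonneg {x x0 : ℝ} (hx : 0 ≤ x) (hx0 : x ≤ x0) (i j : ℕ) :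
    0 ≤ x ^ i * (x0 - x) ^ j :=
  mul_nonneg (pow_nonneg hx i) (pow_nonneg (sub_nonneg.2 hx0) j)

lemma num5 : NumFacts (5 : ℕ) (4 / ((5 : ℕ) : ℝ) - 8 / ((5 : ℕ) : ℝ) ^ 2) (121/5000) (1851/5000) := by
  refine ⟨by norm_num, by norm_num, by norm_num, by norm_num, by norm_num, by norm_num, ?_⟩
  intro x hx hx0
  have e0 : (4 / ((5 : ℕ) : ℝ) - 8 / ((5 : ℕ) : ℝ) ^ 2) = 12/25 := by norm_num
  rw [e0] at hx0 ⊢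
  have H := bern_nonneg hx.le hx0
  unfold PolyIneq LA WB
  refine ⟨?_, ?_, ?_, ?_, ?_⟩
  · norm_num; linarith
  · norm_num; linarith
  · norm_num; linarith [H 0 2, H 1 1, H 2 0]
  · norm_num; linarith [H 1 4, H 2 3, H 3 2, H 4 1, H 5 0]
  · norm_num; linarith [H 0 6, H 1 5, H 2 4, H 3 3, H 4 2, H 5 1, H 6 0]

lemma num6 : NumFacts (6 : ℕ) (4 / ((6 : ℕ) : ℝ) - 8 / ((6 : ℕ) : ℝ) ^ 2) (17/200) (1603/5000) := by
  refine ⟨by norm_num, by norm_num, by norm_num, by norm_num, by norm_num, by norm_num, ?_⟩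
  intro x hx hx0
  have e0 : (4 / ((6 : ℕ) : ℝ) - 8 / ((6 : ℕ) : ℝ) ^ 2) = 4/9 := by norm_num
  rw [e0] at hx0 ⊢
  have H := bern_nonneg hx.le hx0
  unfold PolyIneq LA WB
  refine ⟨?_, ?_, ?_, ?_, ?_⟩
  · norm_num; linarith
  · norm_num; linarith
  · norm_num; linarith [H 0 2, H 1 1, H 2 0]
  · norm_num; linarith [H 1 4, H 2 3, H 3 2, H 4 1, H 5 0]
  · norm_num; linarith [H 0 6, H 1 5, H 2 4, H 3 3, H 4 2, H 5 1, H 6 0]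

lemma num7 : NumFacts (7 : ℕ) (4 / ((7 : ℕ) : ℝ) - 8 / ((7 : ℕ) : ℝ) ^ 2) (583/5000) (699/2500) := by
  refine ⟨by norm_num, by norm_num, by norm_num, by norm_num, by norm_num, by norm_num, ?_⟩
  intro x hx hx0
  have e0 : (4 / ((7 : ℕ) : ℝ) - 8 / ((7 : ℕ) : ℝ) ^ 2) = 20/49 := by norm_num
  rw [e0] at hx0 ⊢
  have H := bern_nonneg hx.le hx0
  unfold PolyIneq LA WB
  refine ⟨?_, ?_, ?_, ?_, ?_⟩
  · norm_num; linarith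
  · norm_num; linarith
  · norm_num; linarith [H 0 2, H 1 1, H 2 0]
  · norm_num; linarith [H 1 4, H 2 3, H 3 2, H 4 1, H 5 0]
  · norm_num; linarith [H 0 6, H 1 5, H 2 4, H 3 3, H 4 2, H 5 1, H 6 0]

lemma num8 : NumFacts (8 : ℕ) (4 / ((8 : ℕ) : ℝ) - 8 / ((8 : ℕ) : ℝ) ^ 2) (661/5000) (617/2500) := by
  refine ⟨by norm_num, by norm_num, by norm_num, by norm_num, by norm_num, by norm_num, ?_⟩
  intro x hx hx0
  have e0 : (4 / ((8 : ℕ) : ℝ) - 8 / ((8 : ℕ) : ℝ) ^ 2) = 3/8 := by norm_num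
  rw [e0] at hx0 ⊢
  have H := bern_nonneg hx.le hx0
  unfold PolyIneq LA WB
  refine ⟨?_, ?_, ?_, ?_, ?_⟩
  · norm_num; linarith
  · norm_num; linarith
  · norm_num; linarith [H 0 2, H 1 1, H 2 0]
  · norm_num; linarith [H 1 4, H 2 3, H 3 2, H 4 1, H 5 0]
  · norm_num; linarith [H 0 6, H 1 5, H 2 4, H 3 3, H 4 2, H 5 1, H 6 0]

lemma num9 : NumFacts (9 : ℕ) (4 / ((9 : ℕ) : ℝ) - 8 / ((9 : ℕ) : ℝ) ^ 2) (87/625) (551/2500) := by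
  refine ⟨by norm_num, by norm_num, by norm_num, by norm_num, by norm_num, by norm_num, ?_⟩
  intro x hx hx0
  have e0 : (4 / ((9 : ℕ) : ℝ) - 8 / ((9 : ℕ) : ℝ) ^ 2) = 28/81 := by norm_num
  rw [e0] at hx0 ⊢
  have H := bern_nonneg hx.le hx0
  unfold PolyIneq LA WB
  refine ⟨?_, ?_, ?_, ?_, ?_⟩
  · norm_num; linarith
  · norm_num; linarith
  · norm_num; linarith [H 0 2, H 1 1, H 2 0]
  · norm_num; linarith [H 1 4, H 2 3, H 3 2, H 4 1, H 5 0]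
  · norm_num; linarith [H 0 6, H 1 5, H 2 4, H 3 3, H 4 2, H 5 1, H 6 0]

lemma num10 : NumFacts (10 : ℕ) (4 / ((10 : ℕ) : ℝ) - 8 / ((10 : ℕ) : ℝ) ^ 2) (353/2500) (497/2500) := by
  refine ⟨by norm_num, by norm_num, by norm_num, by norm_num, by norm_num, by norm_num, ?_⟩
  intro x hx hx0
  have e0 : (4 / ((10 : ℕ) : ℝ) - 8 / ((10 : ℕ) : ℝ) ^ 2) = 8/25 := by norm_num
  rw [e0] at hx0 ⊢
  have H := bern_nonneg hx.le hx0
  unfold PolyIneq LA WB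
  refine ⟨?_, ?_, ?_, ?_, ?_⟩
  · norm_num; linarith
  · norm_num; linarith
  · norm_num; linarith [H 0 2, H 1 1, H 2 0]
  · norm_num; linarith [H 1 4, H 2 3, H 3 2, H 4 1, H 5 0]
  · norm_num; linarith [H 0 6, H 1 5, H 2 4, H 3 3, H 4 2, H 5 1, H 6 0]

lemma num11 : NumFacts (11 : ℕ) (4 / ((11 : ℕ) : ℝ) - 8 / ((11 : ℕ) : ℝ) ^ 2) (703/5000) (453/2500) := by
  refine ⟨by norm_num, by norm_num, by norm_num, by norm_num, by norm_num, by norm_num, ?_⟩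
  intro x hx hx0
  have e0 : (4 / ((11 : ℕ) : ℝ) - 8 / ((11 : ℕ) : ℝ) ^ 2) = 36/121 := by norm_num
  rw [e0] at hx0 ⊢
  have H := bern_nonneg hx.le hx0
  unfold PolyIneq LA WB
  refine ⟨?_, ?_, ?_, ?_, ?_⟩
  · norm_num; linarith
  · norm_num; linarith
  · norm_num; linarith [H 0 2, H 1 1, H 2 0]
  · norm_num; linarith [H 1 4, H 2 3, H 3 2, H 4 1, H 5 0]
  · norm_num; linarith [H 0 6, H 1 5, H 2 4, H 3 3, H 4 2, H 5 1, H 6 0]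

lemma num12 : NumFacts (12 : ℕ) (4 / ((12 : ℕ) : ℝ) - 8 / ((12 : ℕ) : ℝ) ^ 2) (691/5000) (831/5000) := by
  refine ⟨by norm_num, by norm_num, by norm_num, by norm_num, by norm_num, by norm_num, ?_⟩
  intro x hx hx0
  have e0 : (4 / ((12 : ℕ) : ℝ) - 8 / ((12 : ℕ) : ℝ) ^ 2) = 5/18 := by norm_num
  rw [e0] at hx0 ⊢
  have H := bern_nonneg hx.le hx0
  unfold PolyIneq LA WB
  refine ⟨?_, ?_, ?_, ?_, ?_⟩
  · norm_num; linarith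
  · norm_num; linarith
  · norm_num; linarith [H 0 2, H 1 1, H 2 0]
  · norm_num; linarith [H 1 4, H 2 3, H 3 2, H 4 1, H 5 0]
  · norm_num; linarith [H 0 6, H 1 5, H 2 4, H 3 3, H 4 2, H 5 1, H 6 0]

lemma numFacts (n : ℕ) (h5 : 5 ≤ n) (h12 : n ≤ 12) :
    ∃ m1 m2 : ℝ, NumFacts n (4 / (n : ℝ) - 8 / (n : ℝ) ^ 2) m1 m2 := by
  interval_cases n
  · exact ⟨121/5000, 1851/5000, num5⟩
  · exact ⟨17/200, 1603/5000, num6⟩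
  · exact ⟨583/5000, 699/2500, num7⟩
  · exact ⟨661/5000, 617/2500, num8⟩
  · exact ⟨87/625, 551/2500, num9⟩
  · exact ⟨353/2500, 497/2500, num10⟩
  · exact ⟨703/5000, 453/2500, num11⟩
  · exact ⟨691/5000, 831/5000, num12⟩

lemma fu_eq (ρ r z : ℝ) (hz : z < 2) :
    fu ρ r (z / 2) = z / (2 - z) * (ρ + 1 - z / (2 - z) * (ρ - r)) := by
  have h : z / 2 / (1 - z / 2) = z / (2 - z) := by
    have : 2 - z ≠ 0 := by linarith
    have : 1 - z / 2 ≠ 0 := by intro h; apply this; linarith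
    field_simp
  unfold fu
  rw [h]

lemma endp {L W x t P Q c r s u U : ℝ} (ht : 0 < t) (hP : 0 < P) (hQ : 0 < Q)
    (hr : r = -(3 / 2) * x) (hs : s = x / (2 * t)) (hLr : 0 < L + 3 / 2 * x)
    (hW : x / 2 < W) (hu : u = t * c / P) (hU : U = c / Q)
    (h : L * W * P ^ 2 * Q ^ 2 < c ^ 2 * (L + 3 / 2 * x) *
      (L * (P - t * c) + -(3 / 2) * x * t * c + P) * (W - x / 2) *
      (W * (Q - c) + x * c / 2 + t * Q)) :
    L * (W / t) / ((L - r) * (W / t - s)) <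
      u * (L + 1 - u * (L - r)) * (U * (W / t + 1 - U * (W / t - s))) := by
  have e1 : u * (L + 1 - u * (L - r)) =
      t * c * (L * (P - t * c) + -(3 / 2) * x * t * c + P) / P ^ 2 := by
    rw [hu, hr]; field_simp; ring
  have e2 : U * (W / t + 1 - U * (W / t - s)) =
      c * (W * (Q - c) + x * c / 2 + t * Q) / (t * Q ^ 2) := by
    rw [hU, hs]; field_simp; ring
  have hW' : 0 < W - x / 2 := by linarith
  have e3 : (L - r) * (W / t - s) = (L + 3 / 2 * x) * (W - x / 2) / t := by
    rw [hr, hs]; field_simp; ring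
  have e4 : L * (W / t) / ((L + 3 / 2 * x) * (W - x / 2) / t) =
      L * W / ((L + 3 / 2 * x) * (W - x / 2)) := by
    field_simp
  have e5 : t * c * (L * (P - t * c) + -(3 / 2) * x * t * c + P) / P ^ 2 *
      (c * (W * (Q - c) + x * c / 2 + t * Q) / (t * Q ^ 2)) =
      c ^ 2 * (L * (P - t * c) + -(3 / 2) * x * t * c + P) *
        (W * (Q - c) + x * c / 2 + t * Q) / (P ^ 2 * Q ^ 2) := by
    field_simp
  rw [e1, e2, e3, e4, e5, div_lt_div_iff₀ (by positivity) (by positivity)]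
  linarith

lemma mono_rho {L ρ r u : ℝ} (hL : 0 < L) (hLρ : L ≤ ρ) (hu1 : u ≤ 1)
    (hδ : 0 ≤ L ^ 2 * (1 - u) + r + r ^ 2 * u) :
    (L - r) * (L + 1 - u * (L - r)) / L ≤ (ρ - r) * (ρ + 1 - u * (ρ - r)) / ρ := by
  have hρ : 0 < ρ := by linarith
  rw [div_le_div_iff₀ hL hρ]
  have h1 : 0 ≤ (1 - u) * L * (ρ - L) :=
    mul_nonneg (mul_nonneg (by linarith) hL.le) (by linarith)
  have h2 : 0 ≤ (ρ - L) * ((1 - u) * ρ * L + r + r ^ 2 * u) :=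
    mul_nonneg (by linarith) (by nlinarith)
  nlinarith

set_option maxHeartbeats 1000000 in
lemma rho_facts {N x0 m1 m2 x y r s S1 S2 ρ₁ ρ₂ u U : ℝ} (hN : 5 ≤ N)
    (hx01 : x0 ≤ 12 / 25) (hnum : NumFacts N x0 m1 m2) (hx : 0 < x) (hxx : x ≤ x0)
    (hy0 : (2 - x0) / (2 - x) < y) (hy1 : y ≤ 1)
    (hr : r = -(3 / 2) * x) (hs : s = x / (2 * (1 - x)))
    (hS1 : S1 = Real.sqrt ((1 - r) * ((N - 2) * r + N) / N))
    (hS2 : S2 = Real.sqrt ((1 - s) * ((N - 2) * s + N) / N))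
    (hρ₁ : ρ₁ = N / (N - 1) * (3 / 2 * r + (N + 2) / (2 * (N - 1)) * (1 - r + S1)))
    (hρ₂ : ρ₂ = N / (N - 1) * (3 / 2 * s + (N + 2) / (2 * (N - 1)) * (1 - s + S2)))
    (hu : u = (1 - x) * y / (2 - (1 - x) * y)) (hU : U = y / (2 - y)) :
    (0 < S1 ∧ S1 ^ 2 = (1 - r) * ((N - 2) * r + N) / N) ∧
    (0 < S2 ∧ S2 ^ 2 = (1 - s) * ((N - 2) * s + N) / N) ∧
    0 < ρ₁ ∧ 0 < ρ₁ - r ∧ 0 < ρ₂ ∧ 0 < ρ₂ - s ∧ 0 < u ∧ 0 < U ∧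
    0 < ρ₁ ^ 2 * (1 - u) + r + r ^ 2 * u ∧ 0 < ρ₂ ^ 2 * (1 - U) + s + s ^ 2 * U ∧
    0 < ρ₁ + 1 - u * (ρ₁ - r) ∧ 0 < ρ₂ + 1 - U * (ρ₂ - s) ∧
    0 < (ρ₁ - r) * (u * (ρ₁ + 1 - u * (ρ₁ - r))) * ((ρ₂ - s) * (U * (ρ₂ + 1 - U * (ρ₂ - s))))
      - ρ₁ * ρ₂ := by
  obtain ⟨hm1x, hm2x, hm1, hm2, hc1, hc2, hpoly⟩ := hnum
  obtain ⟨hL0, hW0, hδL, hA, hB⟩ := hpoly x hx hxx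
  set L := LA N m1 x with hL
  set W := WB N m2 x with hW
  have ht : 0 < 1 - x := by linarith
  set t := 1 - x with htdef
  have hs0 : 0 < s := by rw [hs]; positivity
  have hss : s ≤ x0 / (2 * (1 - x0)) := by
    rw [hs, div_le_div_iff₀ (by positivity) (by linarith)]
    linarith [mul_comm x x0]
  have hN0 : 0 < N := by linarith
  have hN1 : 0 < N - 1 := by linarith
  -- the square roots
  have hi : 2 / N ≤ 2 / 5 := by
    apply div_le_div_of_nonneg_left <;> linarith
  have q1 : (1 - m1 * x) ^ 2 ≤ (1 - r) * ((N - 2) * r + N) / N := by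
    have : (1 - r) * ((N - 2) * r + N) / N = 1 + 3 / N * x - (1 - 2 / N) * (9 / 4) * x ^ 2 := by
      rw [hr]; field_simp; ring
    rw [this]
    have : x * (m1 ^ 2 + 9 / 4 * (1 - 2 / N)) ≤ 2 * m1 + 3 / N :=
      le_trans (mul_le_mul_of_nonneg_right hxx (by linarith [sq_nonneg m1])) hc1
    have := mul_le_mul_of_nonneg_left this hx.le
    linarith
  have q2 : (1 - m2 * s) ^ 2 ≤ (1 - s) * ((N - 2) * s + N) / N := by
    have : (1 - s) * ((N - 2) * s + N) / N = 1 - 2 / N * s - (1 - 2 / N) * s ^ 2 := by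
      field_simp; ring
    rw [this]
    have : s * (m2 ^ 2 + 1 - 2 / N) ≤ 2 * m2 - 2 / N :=
      le_trans (mul_le_mul_of_nonneg_right hss (by linarith [sq_nonneg m2])) hc2
    have := mul_le_mul_of_nonneg_left this hs0.le
    linarith
  have p1 : 0 < 1 - m1 * x := by linarith [mul_le_mul_of_nonneg_left hxx hm1]
  have p2 : 0 < 1 - m2 * s := by linarith [mul_le_mul_of_nonneg_left hss hm2]
  have b1 : 1 - m1 * x ≤ S1 := by rw [hS1]; exact Real.le_sqrt_of_sq_le q1
  have b2 : 1 - m2 * s ≤ S2 := by rw [hS2]; exact Real.le_sqrt_of_sq_le q2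
  have sq1 : S1 ^ 2 = (1 - r) * ((N - 2) * r + N) / N := by
    rw [hS1]; exact Real.sq_sqrt (le_trans (sq_nonneg _) q1)
  have sq2 : S2 ^ 2 = (1 - s) * ((N - 2) * s + N) / N := by
    rw [hS2]; exact Real.sq_sqrt (le_trans (sq_nonneg _) q2)
  -- lower bounds
  have hLρ : L ≤ ρ₁ := by
    rw [hρ₁, hL, LA]
    apply mul_le_mul_of_nonneg_left _ (by positivity)
    have : (N + 2) / (2 * (N - 1)) * (2 + 3 * x / 2 - m1 * x) ≤
        (N + 2) / (2 * (N - 1)) * (1 - r + S1) :=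
      mul_le_mul_of_nonneg_left (by rw [hr]; linarith) (by positivity)
    rw [hr] at this ⊢
    linarith
  have hWρ : W / t ≤ ρ₂ := by
    have : W / t = N / (N - 1) * (3 / 2 * s + (N + 2) / (2 * (N - 1)) * (2 - s - m2 * s)) := by
      rw [hW, WB, hs]
      field_simp
      ring
    rw [this, hρ₂]
    apply mul_le_mul_of_nonneg_left _ (by positivity)
    have : (N + 2) / (2 * (N - 1)) * (2 - s - m2 * s) ≤
        (N + 2) / (2 * (N - 1)) * (1 - s + S2) :=
      mul_le_mul_of_nonneg_left (by linarith) (by positivity)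
    linarith
  clear_value L W t
  have hsW : s < W / t := by
    rw [hs, div_lt_div_iff₀ (by positivity) ht]
    linarith [mul_lt_mul_of_pos_right hW0 ht]
  have hr1 : -1 < r := by rw [hr]; linarith
  have hr0 : r < 0 := by rw [hr]; linarith
  have hW00 : 0 < W / t := by linarith
  have hy00 : 0 < y := lt_trans (div_pos (by linarith) (by linarith)) hy0
  have hty : t * y ≤ t := mul_le_of_le_one_right ht.le hy1
  have hty0 : 0 < t * y := by positivity
  have hd1 : 0 < 2 - t * y := by linarith
  have hd2 : 0 < 2 - y := by linarith
  have hu0 : 0 < u := by rw [hu]; positivity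
  have hU0 : 0 < U := by rw [hU]; positivity
  have hut : u ≤ t / (2 - t) := by
    rw [hu, div_le_div_iff₀ hd1 (by linarith)]
    linarith
  have hu1 : u < 1 := by rw [hu, div_lt_one hd1]; linarith
  have hU1 : U ≤ 1 := by rw [hU, div_le_one hd2]; linarith
  have hrL : r ^ 2 ≤ L ^ 2 := by
    have : 0 ≤ 2 * L ^ 2 - 2 * r ^ 2 := by
      rw [hr]
      have h1 : x * x ≤ 12 / 25 * x := mul_le_mul_of_nonneg_right (by linarith) hx.le
      rw [htdef] at hδL
      linarith
    linarith
  have hδ1L : 0 < L ^ 2 * (1 - u) + r + r ^ 2 * u := by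
    have h1 : L ^ 2 * (1 - t / (2 - t)) + r + r ^ 2 * (t / (2 - t)) ≤
        L ^ 2 * (1 - u) + r + r ^ 2 * u := by
      linarith [mul_nonneg (sub_nonneg.2 hrL) (sub_nonneg.2 hut)]
    have h2 : L ^ 2 * (1 - t / (2 - t)) + r + r ^ 2 * (t / (2 - t)) =
        x * (2 * L ^ 2 - (3 / 2 * (1 + x) - 9 / 4 * x * (1 - x))) / (1 + x) := by
      have h3 : 2 - t = 1 + x := by rw [htdef]; ring
      rw [h3, hr, htdef]
      field_simp
      ring
    have h4 : 0 < x * (2 * L ^ 2 - (3 / 2 * (1 + x) - 9 / 4 * x * (1 - x))) / (1 + x) := by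
      apply div_pos (mul_pos hx _) (by linarith)
      rw [htdef] at hδL
      linarith
    linarith
  have hδ2L : 0 ≤ (W / t) ^ 2 * (1 - U) + s + s ^ 2 * U := by
    have : 0 ≤ (W / t) ^ 2 * (1 - U) := mul_nonneg (sq_nonneg _) (by linarith)
    positivity
  have M1 := mono_rho hL0 hLρ hu1.le hδ1L.le
  have M2 := mono_rho hW00 hWρ hU1 hδ2L
  have hρ10 : 0 < ρ₁ := by linarith
  have hρ20 : 0 < ρ₂ := by linarith
  have X1 : 0 < ρ₁ + 1 - u * (ρ₁ - r) := by
    linarith [mul_le_of_le_one_left (a := u) (b := ρ₁ - r) (by linarith) hu1.le]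
  have X2 : 0 < ρ₂ + 1 - U * (ρ₂ - s) := by
    linarith [mul_le_of_le_one_left (a := U) (b := ρ₂ - s) (by linarith) hU1]
  have Y1 : 0 < L + 1 - u * (L - r) := by
    linarith [mul_le_of_le_one_left (a := u) (b := L - r) (by linarith) hu1.le]
  have Y2 : 0 < W / t + 1 - U * (W / t - s) := by
    linarith [mul_le_of_le_one_left (a := U) (b := W / t - s) (by linarith) hU1]
  refine ⟨⟨by linarith, sq1⟩, ⟨by linarith, sq2⟩, hρ10, by linarith, hρ20, by linarith, hu0, hU0,
    ?_, ?_, X1, X2, ?_⟩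
  · have : L ^ 2 * (1 - u) ≤ ρ₁ ^ 2 * (1 - u) :=
      mul_le_mul_of_nonneg_right (pow_le_pow_left₀ hL0.le hLρ 2) (by linarith)
    linarith
  · have : 0 ≤ ρ₂ ^ 2 * (1 - U) := mul_nonneg (sq_nonneg _) (by linarith)
    positivity
  -- the product inequality for the lower bounds
  have hLr : 0 < L - r := by linarith
  have hWs : 0 < W / t - s := by linarith
  have hy0p : 0 < (2 - x0) / (2 - x) := div_pos (by linarith) (by linarith)
  have hy01 : (2 - x0) / (2 - x) ≤ 1 := by rw [div_le_one (by linarith)]; linarith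
  have E0 := interp (ρ := L) (r := r) (σ := W / t) (s := s) (t := t) (y := y)
    (y0 := (2 - x0) / (2 - x)) (K := L * (W / t) / ((L - r) * (W / t - s)))
    hr1 (by linarith) (by linarith) hsW.le ht (by linarith) hy0p hy0 hy1 (by positivity)
    (by
      rw [fu_eq _ _ _ (by linarith [mul_le_of_le_one_right ht.le hy01]), fu_eq _ _ _ (by linarith)]
      have hPp : 0 < 2 * (2 - x) - t * (2 - x0) := by
        have : t * (2 - x0) ≤ 1 * (2 - x0) := mul_le_mul_of_nonneg_right (by linarith) (by linarith)
        linarith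
      have hQp : 0 < 2 * (2 - x) - (2 - x0) := by linarith
      have h2x : 0 < 2 - x := by linarith
      refine endp ht hPp hQp hr hs (by linarith) hW0 (c := 2 - x0) ?_ ?_ ?_
      · have : 2 - t * ((2 - x0) / (2 - x)) = (2 * (2 - x) - t * (2 - x0)) / (2 - x) := by
          field_simp
        rw [this]
        field_simp
      · have : 2 - (2 - x0) / (2 - x) = (2 * (2 - x) - (2 - x0)) / (2 - x) := by
          field_simp
        rw [this]
        field_simp
      · refine lt_of_lt_of_eq hB ?_
        ring)
    (by
      rw [fu_eq _ _ _ (by linarith), fu_eq _ _ _ (by norm_num)]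
      refine endp ht (P := 1 + x) (Q := 1) (by linarith) one_pos hr hs (by linarith) hW0
        (c := 1) ?_ ?_ ?_
      · congr 1
        rw [htdef]; ring
      · norm_num
      · refine lt_of_eq_of_lt ?_ (lt_of_lt_of_eq hA ?_)
        · ring
        · rw [htdef]; ring)
  rw [fu_eq _ _ _ (by linarith), fu_eq _ _ _ (by linarith), ← hu, ← hU,
    div_lt_iff₀ (by positivity)] at E0
  have E1 : 1 < ((L - r) * (L + 1 - u * (L - r)) / L) *
      ((W / t - s) * (W / t + 1 - U * (W / t - s)) / (W / t)) * (u * U) := by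
    have : ((L - r) * (L + 1 - u * (L - r)) / L) *
      ((W / t - s) * (W / t + 1 - U * (W / t - s)) / (W / t)) * (u * U) =
      (u * (L + 1 - u * (L - r)) * (U * (W / t + 1 - U * (W / t - s))) *
        ((L - r) * (W / t - s))) / (L * (W / t)) := by
      generalize W / t = Z
      rw [div_mul_div_comm, div_mul_eq_mul_div]
      congr 1
      ring
    rw [this, lt_div_iff₀ (by positivity)]
    linarith
  have E2 : ((L - r) * (L + 1 - u * (L - r)) / L) *
      ((W / t - s) * (W / t + 1 - U * (W / t - s)) / (W / t)) * (u * U) ≤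
      ((ρ₁ - r) * (ρ₁ + 1 - u * (ρ₁ - r)) / ρ₁) *
      ((ρ₂ - s) * (ρ₂ + 1 - U * (ρ₂ - s)) / ρ₂) * (u * U) := by
    apply mul_le_mul_of_nonneg_right _ (by positivity)
    apply mul_le_mul M1 M2 (by positivity)
    exact div_nonneg (mul_nonneg (by linarith) X1.le) hρ10.le
  have E3 := lt_of_lt_of_le E1 E2
  have E4 : ((ρ₁ - r) * (ρ₁ + 1 - u * (ρ₁ - r)) / ρ₁) *
      ((ρ₂ - s) * (ρ₂ + 1 - U * (ρ₂ - s)) / ρ₂) * (u * U) =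
      ((ρ₁ - r) * (u * (ρ₁ + 1 - u * (ρ₁ - r))) * ((ρ₂ - s) * (U * (ρ₂ + 1 - U * (ρ₂ - s)))))
        / (ρ₁ * ρ₂) := by
    rw [div_mul_div_comm, div_mul_eq_mul_div]
    congr 1
    ring
  rw [E4, lt_div_iff₀ (by positivity)] at E3
  linarith

lemma delta_eq {p r ρ θ u δ : ℝ} (hp : p = 1 / u) (hu : 0 < u) (hθ : θ = (ρ - r) / p)
    (hδ : δ = (r + θ * p) * (r + θ * (p - 2) + 1) + θ * (θ - 1) * p) :
    δ = ρ ^ 2 * (1 - u) + r + r ^ 2 * u := by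
  rw [hδ, hθ, hp]; field_simp; ring

lemma beta_eq {N p r ρ θ u δ A β : ℝ} (hN : 1 < N) (hp : p = 1 / u) (hu : 0 < u)
    (hθ : θ = (ρ - r) / p) (hδ : δ = ρ ^ 2 * (1 - u) + r + r ^ 2 * u) (hδ0 : 0 < δ)
    (hA : ρ = N / (N - 1) * A)
    (hβ : β = A * (2 * θ * (p - 1) + r + 1) / δ - (N - 1) / N) :
    β = (N - 1) / N * ((ρ - r) * (ρ + 1 - u * (ρ - r))) / δ := by
  have hN1 : 0 < N - 1 := by linarith
  have hA' : A = (N - 1) / N * ρ := by rw [hA]; field_simp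
  have h1 : 2 * θ * (p - 1) + r + 1 = 2 * (ρ - r) * (1 - u) + r + 1 := by
    rw [hθ, hp]; field_simp
  rw [hβ, h1, hA', eq_div_iff hδ0.ne', sub_mul, div_mul_cancel₀ _ hδ0.ne', hδ]
  ring

lemma gamma_eq {N p ρ u δ A γ : ℝ} (hN : 1 < N) (hp : p = 1 / u)
    (hA : ρ = N / (N - 1) * A) (hγ : γ = A * p / δ) :
    γ = (N - 1) / N * (ρ * (1 / u)) / δ := by
  have hN1 : 0 < N - 1 := by linarith
  have hA' : A = (N - 1) / N * ρ := by rw [hA]; field_simp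
  rw [hγ, hA', hp]; ring

lemma alpha_pos_s15 {N r S ε k α : ℝ} (hN : 1 < N)
    (hS2 : S ^ 2 = (1 - r) * ((N - 2) * r + N) / N) (hε : 0 < ε)
    (hεS : 0 < S - (N - 1) / N * ε)
    (hk : k = N / (2 * (N - 1)) * (r - 1 - S) + ε)
    (hα : α = -((N - 1) / N) * k ^ 2 + k * (r - 1) - r * (r - 1) / 2) : 0 < α := by
  have hN1 : 0 < N - 1 := by linarith
  have : α = ε * (S - (N - 1) / N * ε) +
      N / (4 * (N - 1)) * ((1 - r) * ((N - 2) * r + N) / N - S ^ 2) := by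
    rw [hα, hk]; field_simp; ring
  rw [this, hS2, sub_self, mul_zero, add_zero]
  positivity

lemma eventually_pos {f : ℝ → ℝ} (hf : Continuous f) (h : 0 < f 0) :
    ∀ᶠ ε in nhdsWithin (0 : ℝ) (Set.Ioi 0), 0 < f ε :=
  ((hf.tendsto 0).eventually (lt_mem_nhds h)).filter_mono nhdsWithin_le_nhds

theorem positivity_condition_low_dimension (n : ℕ) (hn5 : 5 ≤ n)
    (hn12 : n ≤ 12) :
    ∀ d₁ d₂ : ℝ, 0 ≤ d₂ → d₂ < d₁ → d₁ < 2 - d₂ - 4 / (n : ℝ) →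
    ∃ ε₀ : ℝ, 0 < ε₀ ∧
      ∀ p q r s k₁ k₂ ρ₁ ρ₂ θ₁ θ₂ δ₁ δ₂ α₁ α₂ β₁ β₂ γ₁ γ₂ : ℝ,
        1 / (p + 1) = 1 / 2 - d₁ / (n : ℝ) →
        1 / (q + 1) = 1 / 2 - d₂ / (n : ℝ) →
        r = -3 * (d₁ - d₂) / ((n : ℝ) - 2 * d₂) →
        s = (d₁ - d₂) / ((n : ℝ) - 2 * d₁) →
        k₁ = (n : ℝ) / (2 * ((n : ℝ) - 1)) *
            (r - 1 - Real.sqrt ((1 - r) * (((n : ℝ) - 2) * r + n) / n)) + ε₀ →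
        k₂ = (n : ℝ) / (2 * ((n : ℝ) - 1)) *
            (s - 1 - Real.sqrt ((1 - s) * (((n : ℝ) - 2) * s + n) / n)) + ε₀ →
        ρ₁ = (n : ℝ) / ((n : ℝ) - 1) * ((3 / 2) * r - ((n : ℝ) + 2) / n * k₁) →
        ρ₂ = (n : ℝ) / ((n : ℝ) - 1) * ((3 / 2) * s - ((n : ℝ) + 2) / n * k₂) →
        θ₁ = (ρ₁ - r) / p →
        θ₂ = (ρ₂ - s) / q →
        δ₁ = (r + θ₁ * p) * (r + θ₁ * (p - 2) + 1) + θ₁ * (θ₁ - 1) * p →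
        δ₂ = (s + θ₂ * q) * (s + θ₂ * (q - 2) + 1) + θ₂ * (θ₂ - 1) * q →
        α₁ = -(((n : ℝ) - 1) / n) * k₁ ^ 2 + k₁ * (r - 1) - r * (r - 1) / 2 →
        α₂ = -(((n : ℝ) - 1) / n) * k₂ ^ 2 + k₂ * (s - 1) - s * (s - 1) / 2 →
        β₁ = ((3 / 2) * r - ((n : ℝ) + 2) / n * k₁) *
            (2 * θ₁ * (p - 1) + r + 1) / δ₁ - ((n : ℝ) - 1) / n →
        β₂ = ((3 / 2) * s - ((n : ℝ) + 2) / n * k₂) *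
            (2 * θ₂ * (q - 1) + s + 1) / δ₂ - ((n : ℝ) - 1) / n →
        γ₁ = ((3 / 2) * r - ((n : ℝ) + 2) / n * k₁) * p / δ₁ →
        γ₂ = ((3 / 2) * s - ((n : ℝ) + 2) / n * k₂) * q / δ₂ →
        0 < α₁ ∧ 0 < α₂ ∧ 0 < β₁ ∧ 0 < β₂ ∧ 0 < γ₁ ∧ 0 < γ₂ ∧
          0 < β₁ * β₂ - γ₁ * γ₂ := by
  intro d₁ d₂ hd2 hd12 hd1
  obtain ⟨m1, m2, hnum⟩ := numFacts n hn5 hn12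
  have hN5 : (5 : ℝ) ≤ n := by exact_mod_cast hn5
  have hN12 : (n : ℝ) ≤ 12 := by exact_mod_cast hn12
  generalize (n : ℝ) = N at *
  have hN0 : 0 < N := by linarith
  have hN1 : 0 < N - 1 := by linarith
  have hx01 : 4 / N - 8 / N ^ 2 ≤ 12 / 25 := by
    rw [div_sub_div _ _ (by positivity) (by positivity), div_le_div_iff₀ (by positivity) (by norm_num)]
    have h : 0 ≤ N * (N - 5) * (3 * N - 10) :=
      mul_nonneg (mul_nonneg hN0.le (by linarith)) (by linarith)
    nlinarith
  have h4N : 0 < 4 / N := by positivity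
  obtain ⟨a, ha⟩ : ∃ a, a = N - 2 * d₁ := ⟨_, rfl⟩
  obtain ⟨b, hb⟩ : ∃ b, b = N - 2 * d₂ := ⟨_, rfl⟩
  have ha0 : 0 < a := by linarith
  have hb0 : 0 < b := by linarith
  have hab : a < b := by linarith
  have hbN : b ≤ N := by linarith
  have hC : N * (2 - (4 / N - 8 / N ^ 2)) < a + b := by
    have : N * (2 - (4 / N - 8 / N ^ 2)) = 2 * N - 4 + 2 * (4 / N) := by
      field_simp
      ring
    rw [this]; linarith
  obtain ⟨x0, hx0⟩ : ∃ x0, x0 = 4 / N - 8 / N ^ 2 := ⟨_, rfl⟩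
  rw [← hx0] at hC hx01 hnum
  obtain ⟨x, hx⟩ : ∃ x, x = 1 - a / b := ⟨_, rfl⟩
  have h1x : 1 - x = a / b := by rw [hx]; ring
  have hxpos : 0 < x := by
    rw [hx, sub_pos, div_lt_one hb0]; exact hab
  have hxx : x ≤ x0 := by
    have h2 : 1 - x0 ≤ a / b := by
      rw [le_div_iff₀ hb0]
      have : b * (2 - x0) ≤ N * (2 - x0) := mul_le_mul_of_nonneg_right hbN (by linarith)
      linarith
    linarith
  have hy1 : b / N ≤ 1 := by rw [div_le_one hN0]; exact hbN
  have hy0 : (2 - x0) / (2 - x) < b / N := by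
    have h2 : 2 - x = (a + b) / b := by rw [hx]; field_simp; ring
    rw [h2, div_div_eq_mul_div, div_lt_div_iff₀ (by positivity) hN0]
    linarith [mul_lt_mul_of_pos_left hC hb0]
  obtain ⟨r, hr⟩ : ∃ r, r = -3 * (d₁ - d₂) / (N - 2 * d₂) := ⟨_, rfl⟩
  obtain ⟨s, hs⟩ : ∃ s, s = (d₁ - d₂) / (N - 2 * d₁) := ⟨_, rfl⟩
  have hr' : r = -(3 / 2) * x := by
    have : d₁ - d₂ = (b - a) / 2 := by rw [ha, hb]; ring
    rw [hr, ← hb, this, hx]; field_simp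
  have hs' : s = x / (2 * (1 - x)) := by
    have : d₁ - d₂ = (b - a) / 2 := by rw [ha, hb]; ring
    rw [hs, ← ha, this, h1x, hx]; field_simp
  obtain ⟨S1, hS1⟩ : ∃ S, S = Real.sqrt ((1 - r) * ((N - 2) * r + N) / N) := ⟨_, rfl⟩
  obtain ⟨S2, hS2⟩ : ∃ S, S = Real.sqrt ((1 - s) * ((N - 2) * s + N) / N) := ⟨_, rfl⟩
  obtain ⟨R1, hR1⟩ : ∃ R, R = N / (N - 1) * (3 / 2 * r + (N + 2) / (2 * (N - 1)) * (1 - r + S1)) :=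
    ⟨_, rfl⟩
  obtain ⟨R2, hR2⟩ : ∃ R, R = N / (N - 1) * (3 / 2 * s + (N + 2) / (2 * (N - 1)) * (1 - s + S2)) :=
    ⟨_, rfl⟩
  obtain ⟨u, hu⟩ : ∃ u, u = (1 - x) * (b / N) / (2 - (1 - x) * (b / N)) := ⟨_, rfl⟩
  obtain ⟨U, hU⟩ : ∃ U, U = (b / N) / (2 - b / N) := ⟨_, rfl⟩
  obtain ⟨⟨hS1p, hS1q⟩, ⟨hS2p, hS2q⟩, f1, f2, f3, f4, hu0, hU0, f5, f6, f7, f8, f9⟩ :=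
    rho_facts hN5 hx01 hnum hxpos hxx hy0 hy1 hr' hs' hS1 hS2 hR1 hR2 hu hU
  have hu' : u = a / (2 * N - a) := by
    have h2 : (1 - x) * (b / N) = a / N := by rw [h1x]; field_simp
    have h3 : 2 - a / N = (2 * N - a) / N := by field_simp
    rw [hu, h2, h3, div_div_div_cancel_right₀ hN0.ne']
  have hU' : U = b / (2 * N - b) := by
    have h3 : 2 - b / N = (2 * N - b) / N := by field_simp
    rw [hU, h3, div_div_div_cancel_right₀ hN0.ne']
  obtain ⟨κ, hκ⟩ : ∃ κ, κ = (N + 2) / (N - 1) := ⟨_, rfl⟩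
  have c0 := eventually_pos (f := fun ε => S1 - (N - 1) / N * ε) (by fun_prop) (by simpa using hS1p)
  have c0' := eventually_pos (f := fun ε => S2 - (N - 1) / N * ε) (by fun_prop) (by simpa using hS2p)
  have c1 := eventually_pos (f := fun ε => R1 - κ * ε) (by fun_prop) (by simpa using f1)
  have c2 := eventually_pos (f := fun ε => R1 - κ * ε - r) (by fun_prop) (by simpa using f2)
  have c3 := eventually_pos (f := fun ε => R2 - κ * ε) (by fun_prop) (by simpa using f3)
  have c4 := eventually_pos (f := fun ε => R2 - κ * ε - s) (by fun_prop) (by simpa using f4)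
  have c5 := eventually_pos (f := fun ε => (R1 - κ * ε) ^ 2 * (1 - u) + r + r ^ 2 * u)
    (by fun_prop) (by simp only [mul_zero, sub_zero]; exact f5)
  have c6 := eventually_pos (f := fun ε => (R2 - κ * ε) ^ 2 * (1 - U) + s + s ^ 2 * U)
    (by fun_prop) (by simp only [mul_zero, sub_zero]; exact f6)
  have c7 := eventually_pos (f := fun ε => (R1 - κ * ε) + 1 - u * ((R1 - κ * ε) - r))
    (by fun_prop) (by simp only [mul_zero, sub_zero]; exact f7)
  have c8 := eventually_pos (f := fun ε => (R2 - κ * ε) + 1 - U * ((R2 - κ * ε) - s))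
    (by fun_prop) (by simp only [mul_zero, sub_zero]; exact f8)
  have c9 := eventually_pos (f := fun ε =>
    ((R1 - κ * ε) - r) * (u * ((R1 - κ * ε) + 1 - u * ((R1 - κ * ε) - r))) *
      (((R2 - κ * ε) - s) * (U * ((R2 - κ * ε) + 1 - U * ((R2 - κ * ε) - s))))
      - (R1 - κ * ε) * (R2 - κ * ε))
    (by fun_prop) (by simp only [mul_zero, sub_zero]; exact f9)
  obtain ⟨ε, ⟨⟨⟨⟨⟨⟨⟨⟨⟨⟨⟨g0, g0'⟩, g1⟩, g2⟩, g3⟩, g4⟩, g5⟩, g6⟩, g7⟩, g8⟩, g9⟩, hε⟩⟩ :=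
    (((((((((((c0.and c0').and c1).and c2).and c3).and c4).and c5).and c6).and c7).and c8).and
      c9).and self_mem_nhdsWithin).exists
  have hε0 : 0 < ε := hε
  clear c0 c0' c1 c2 c3 c4 c5 c6 c7 c8 c9 f1 f2 f3 f4 f5 f6 f7 f8 f9
  refine ⟨ε, hε0, ?_⟩
  intro p q r' s' k₁ k₂ ρ₁ ρ₂ θ₁ θ₂ δ₁ δ₂ α₁ α₂ β₁ β₂ γ₁ γ₂ hp hq hr1 hs1 hk₁ hk₂ hρ₁ hρ₂
    hθ₁ hθ₂ hδ₁ hδ₂ hα₁ hα₂ hβ₁ hβ₂ hγ₁ hγ₂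
  rw [← hr] at hr1
  rw [← hs] at hs1
  subst r' s'
  rw [← hS1] at hk₁
  rw [← hS2] at hk₂
  have hp' : p = 1 / u := by
    have h2 : 1 / (p + 1) = a / (2 * N) := by rw [hp, ha]; field_simp
    have h3 : p + 1 = 2 * N / a := by
      rw [← one_div_one_div (p + 1), h2, one_div_div]
    have h4 : p = 2 * N / a - 1 := by linarith
    rw [h4, hu', one_div_div]; field_simp
  have hq' : q = 1 / U := by
    have h2 : 1 / (q + 1) = b / (2 * N) := by rw [hq, hb]; field_simp
    have h3 : q + 1 = 2 * N / b := by
      rw [← one_div_one_div (q + 1), h2, one_div_div]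
    have h4 : q = 2 * N / b - 1 := by linarith
    rw [h4, hU', one_div_div]; field_simp
  have hρ₁' : R1 - κ * ε = ρ₁ := by
    rw [hR1, hκ, hρ₁, hk₁]; field_simp; ring
  have hρ₂' : R2 - κ * ε = ρ₂ := by
    rw [hR2, hκ, hρ₂, hk₂]; field_simp; ring
  simp only [hρ₁', hρ₂'] at g1 g2 g3 g4 g5 g6 g7 g8 g9
  have D1 := delta_eq hp' hu0 hθ₁ hδ₁
  have D2 := delta_eq hq' hU0 hθ₂ hδ₂
  have hD1 : 0 < δ₁ := by rw [D1]; exact g5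
  have hD2 : 0 < δ₂ := by rw [D2]; exact g6
  have B1 := beta_eq (by linarith) hp' hu0 hθ₁ D1 hD1 hρ₁ hβ₁
  have B2 := beta_eq (by linarith) hq' hU0 hθ₂ D2 hD2 hρ₂ hβ₂
  have G1 := gamma_eq (by linarith) hp' hρ₁ hγ₁
  have G2 := gamma_eq (by linarith) hq' hρ₂ hγ₂
  refine ⟨alpha_pos_s15 (by linarith) hS1q hε0 g0 hk₁ hα₁, alpha_pos_s15 (by linarith) hS2q hε0 g0' hk₂ hα₂,
    ?_, ?_, ?_, ?_, ?_⟩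
  · rw [B1]; positivity
  · rw [B2]; positivity
  · rw [G1]; positivity
  · rw [G2]; positivity
  · have : β₁ * β₂ - γ₁ * γ₂ = ((N - 1) / N) ^ 2 / (δ₁ * δ₂ * (u * U)) *
        ((ρ₁ - r) * (u * (ρ₁ + 1 - u * (ρ₁ - r))) * ((ρ₂ - s) * (U * (ρ₂ + 1 - U * (ρ₂ - s))))
          - ρ₁ * ρ₂) := by
      rw [B1, B2, G1, G2]
      clear * - hN0 hu0 hU0 hD1 hD2
      field_simp
    rw [this]
    exact mul_pos (by positivity) g9
end
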